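/- arXiv:math/0105128 — 13 statements merged into one kernel-verified Lean document; each statement's English description precedes it below -/
import Mathlib

section
/- Let λ > 1. On ℝ⁴ with coordinates (q₃, p₁, p₂, p₃) define H(q₃,p₁,p₂,p₃) = ½((λ^{q₃}p₁ + λ^{−q₃}p₂)² + p₃²), I₂(q₃,p₁,p₂,p₃) = p₁p₂, and I₃(q₃,p₁,p₂,p₃) = sin(2π·ln|p₁|/ln λ)·exp(−(p₁p₂)^{−2}) when p₁p₂ ≠ 0 and I₃ = 0 when p₁p₂ = 0. Let T : ℝ⁴ → ℝ⁴ be T(q₃,p₁,p₂,p₃) = (q₃+1, λ^{−1}p₁, λp₂, p₃). Then H ∘ T = H, I₂ ∘ T = I₂ and I₃ ∘ T = I₃. -/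
/-!
STATEMENT 2: For λ > 1, on ℝ⁴ with coordinates (q₃,p₁,p₂,p₃), the Hamiltonian
H = ½((λ^{q₃}p₁ + λ^{−q₃}p₂)² + p₃²) and the integrals I₂ = p₁p₂,
I₃ = sin(2π ln|p₁| / ln λ)·exp(−(p₁p₂)^{−2}) (extended by 0 on {p₁p₂ = 0}) are
invariant under the deck transformation T(q₃,p₁,p₂,p₃) = (q₃+1, λ⁻¹p₁, λp₂, p₃).
-/

theorem integrals_invariant_hyperbolic_case (l : ℝ) (hl : 1 < l)
    (H I₂ I₃ : ℝ × ℝ × ℝ × ℝ → ℝ) (T : ℝ × ℝ × ℝ × ℝ → ℝ × ℝ × ℝ × ℝ)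
    (hH : H = fun x => (1/2) * ((l ^ x.1 * x.2.1 + l ^ (-x.1) * x.2.2.1)^2 + x.2.2.2^2))
    (hI₂ : I₂ = fun x => x.2.1 * x.2.2.1)
    (hI₃ : I₃ = fun x => if x.2.1 * x.2.2.1 = 0 then 0 else
      Real.sin (2 * Real.pi * Real.log |x.2.1| / Real.log l) *
        Real.exp (-((x.2.1 * x.2.2.1) ^ (-2 : ℤ))))
    (hT : T = fun x => (x.1 + 1, l⁻¹ * x.2.1, l * x.2.2.1, x.2.2.2)) :
    H ∘ T = H ∧ I₂ ∘ T = I₂ ∧ I₃ ∘ T = I₃ := by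
  have hl0 : 0 < l := one_pos.trans hl
  have hne : l ≠ 0 := hl0.ne'
  have hlog : Real.log l ≠ 0 := (Real.log_pos hl).ne'
  have hprod (a b : ℝ) : l⁻¹ * a * (l * b) = a * b := by field_simp
  subst hH hI₂ hI₃ hT
  refine ⟨?_, ?_, ?_⟩
  · funext ⟨q, a, b, c⟩
    have hpos : l ^ (q + 1) * (l⁻¹ * a) = l ^ q * a := by
      rw [Real.rpow_add_one hne]
      field_simp
    have hneg : l ^ (-(q + 1)) * (l * b) = l ^ (-q) * b := by
      rw [neg_add, ← sub_eq_add_neg, Real.rpow_sub_one hne]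
      field_simp
    simp only [Function.comp_apply, hpos, hneg]
  · funext ⟨q, a, b, c⟩
    exact hprod a b
  · funext ⟨q, a, b, c⟩
    simp only [Function.comp_apply, hprod]
    split_ifs with hab
    · rfl
    · have ha : |a| ≠ 0 := abs_ne_zero.mpr (left_ne_zero_of_mul hab)
      have harg : 2 * Real.pi * Real.log |l⁻¹ * a| / Real.log l =
          2 * Real.pi * Real.log |a| / Real.log l - 2 * Real.pi := by
        rw [abs_mul, abs_of_pos (inv_pos.mpr hl0), Real.log_mul (inv_ne_zero hne) ha,
          Real.log_inv]
        field_simp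
        ring
      rw [harg, Real.sin_sub_two_pi]
end

section
/- Let λ > 1. On ℝ⁶ with coordinates (q₁,q₂,q₃,p₁,p₂,p₃) define H = ½((λ^{q₃}p₁ + λ^{−q₃}p₂)² + p₃²), I₂ = p₁p₂, and I₃ = sin(2π·ln|p₁|/ln λ)·exp(−(p₁p₂)^{−2}) for p₁p₂ ≠ 0, extended by 0 on {p₁p₂ = 0}. Then the canonical Poisson brackets satisfy {H,I₂} = 0, {H,I₃} = 0 and {I₂,I₃} = 0 identically on ℝ⁶, and the differentials dH, dI₂, dI₃ are linearly independent at every point of a dense open subset of ℝ⁶. -/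
/-!
STATEMENT 3: For λ > 1, on ℝ⁶ = T*ℝ³ with coordinates (q₁,q₂,q₃,p₁,p₂,p₃),
the functions H = ½((λ^{q₃}p₁ + λ^{−q₃}p₂)² + p₃²), I₂ = p₁p₂ and
I₃ = sin(2π ln|p₁| / ln λ)·exp(−(p₁p₂)^{−2}) (extended by 0 on {p₁p₂ = 0})
Poisson-commute pairwise, and their differentials are linearly independent on a
dense open subset of ℝ⁶.
Coordinates: qᵢ = x i for i = 0,1,2 and pᵢ = x (i+3) for i = 0,1,2.
-/

/-- Partial derivative of a function on ℝ⁶ in the `i`-th coordinate direction. -/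
noncomputable def pderiv6 (i : Fin 6) (F : (Fin 6 → ℝ) → ℝ) (x : Fin 6 → ℝ) : ℝ :=
  fderiv ℝ F x (Pi.single i 1)

/-- The canonical Poisson bracket on ℝ⁶ = T*ℝ³:
`{F,G} = Σᵢ (∂F/∂qᵢ · ∂G/∂pᵢ − ∂F/∂pᵢ · ∂G/∂qᵢ)`. -/
noncomputable def poisson6 (F G : (Fin 6 → ℝ) → ℝ) (x : Fin 6 → ℝ) : ℝ :=
  ∑ i : Fin 3,
    (pderiv6 ⟨i.1, by have := i.isLt; omega⟩ F x *
       pderiv6 ⟨i.1 + 3, by have := i.isLt; omega⟩ G x -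
     pderiv6 ⟨i.1 + 3, by have := i.isLt; omega⟩ F x *
       pderiv6 ⟨i.1, by have := i.isLt; omega⟩ G x)

/-- The derivative of a function vanishes along a direction of translation invariance, whether or
not the function is differentiable. -/
theorem fderiv_apply_eq_zero_of_translation_invariant {F : (Fin 6 → ℝ) → ℝ} {v : Fin 6 → ℝ}
    (hF : ∀ y (t : ℝ), F (y + t • v) = F y) (x : Fin 6 → ℝ) : fderiv ℝ F x v = 0 := by
  by_cases hd : DifferentiableAt ℝ F x
  · rw [← hd.lineDeriv_eq_fderiv]
    simp [lineDeriv, hF]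
  · simp [fderiv_zero_of_not_differentiableAt hd]

/-- A function that does not depend on the `i`-th coordinate has zero `i`-th partial derivative. -/
theorem pderiv6_eq_zero_of_independent {F : (Fin 6 → ℝ) → ℝ} {i : Fin 6}
    (hF : ∀ y z : Fin 6 → ℝ, (∀ j, j ≠ i → y j = z j) → F y = F z) (x : Fin 6 → ℝ) :
    pderiv6 i F x = 0 :=
  fderiv_apply_eq_zero_of_translation_invariant
    (fun y t => hF _ _ fun j hj => by simp [Pi.single_eq_of_ne hj]) x

/-- Functions that depend only on `(q₃, p₁, p₂, p₃)`, one of which does not depend on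
`(q₃, p₃)`, Poisson-commute. -/
theorem poisson6_eq_zero {F G : (Fin 6 → ℝ) → ℝ}
    (hF : ∀ y z : Fin 6 → ℝ, y 2 = z 2 → y 3 = z 3 → y 4 = z 4 → y 5 = z 5 → F y = F z)
    (hG : ∀ y z : Fin 6 → ℝ, y 3 = z 3 → y 4 = z 4 → G y = G z) (x : Fin 6 → ℝ) :
    poisson6 F G x = 0 := by
  have hF0 : pderiv6 0 F x = 0 := pderiv6_eq_zero_of_independent (fun y z h =>
    hF y z (h 2 (by decide)) (h 3 (by decide)) (h 4 (by decide)) (h 5 (by decide))) x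
  have hF1 : pderiv6 1 F x = 0 := pderiv6_eq_zero_of_independent (fun y z h =>
    hF y z (h 2 (by decide)) (h 3 (by decide)) (h 4 (by decide)) (h 5 (by decide))) x
  have hGi : ∀ i : Fin 6, i ≠ 3 → i ≠ 4 → pderiv6 i G x = 0 := fun i h3 h4 =>
    pderiv6_eq_zero_of_independent (fun y z h => hG y z (h 3 h3.symm) (h 4 h4.symm)) x
  have hG0 := hGi 0 (by decide) (by decide)
  have hG1 := hGi 1 (by decide) (by decide)
  have hG2 := hGi 2 (by decide) (by decide)
  have hG5 := hGi 5 (by decide) (by decide)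
  simp only [poisson6, Fin.sum_univ_three]
  change pderiv6 0 F x * pderiv6 3 G x - pderiv6 3 F x * pderiv6 0 G x +
    (pderiv6 1 F x * pderiv6 4 G x - pderiv6 4 F x * pderiv6 1 G x) +
    (pderiv6 2 F x * pderiv6 5 G x - pderiv6 5 F x * pderiv6 2 G x) = 0
  rw [hF0, hF1, hG0, hG1, hG2, hG5]
  ring

/-- The nonzero `t` at which `cos (c log |t|)` does not vanish. -/
def cosLogNonvanishing (c : ℝ) : Set ℝ := {t | t ≠ 0 ∧ Real.cos (c * Real.log |t|) ≠ 0}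

theorem isOpen_cosLogNonvanishing (c : ℝ) : IsOpen (cosLogNonvanishing c) := by
  have hc : ContinuousOn (fun t : ℝ => Real.cos (c * Real.log |t|)) {0}ᶜ := by
    simp only [Real.log_abs]
    exact Real.continuous_cos.comp_continuousOn (continuousOn_const.mul Real.continuousOn_log)
  exact hc.isOpen_inter_preimage isOpen_compl_singleton (isOpen_compl_singleton (x := (0 : ℝ)))

theorem dense_cosLogNonvanishing {c : ℝ} (hc : c ≠ 0) : Dense (cosLogNonvanishing c) := by
  let a : ℤ → ℝ := fun k => Real.exp ((2 * k + 1) * Real.pi / 2 / c)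
  have hcount : ({0} ∪ (Set.range a ∪ Set.range fun k => -a k) : Set ℝ).Countable :=
    (Set.countable_singleton 0).union ((Set.countable_range _).union (Set.countable_range _))
  refine (hcount.dense_compl ℝ).mono fun t ht => ?_
  simp only [Set.mem_compl_iff, Set.mem_union, Set.mem_singleton_iff, Set.mem_range, not_or] at ht
  obtain ⟨h0, hpos, hneg⟩ := ht
  refine ⟨h0, fun hcos => ?_⟩
  obtain ⟨k, hk⟩ := Real.cos_eq_zero_iff.mp hcos
  have hexp : a k = |t| := by
    have : (2 * k + 1) * Real.pi / 2 / c = Real.log |t| := by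
      rw [← hk]; field_simp
    simp only [a, this, Real.exp_log (abs_pos.mpr h0)]
  rcases abs_choice t with h | h
  · exact hpos ⟨k, hexp.trans h⟩
  · exact hneg ⟨k, by simp [hexp, h]⟩

/-- The derivative along `p₁ ∂/∂p₁ - p₂ ∂/∂p₂` of a function which agrees with
`sin (c log |p₁|) exp (-(p₁ p₂)⁻²)` off `{p₁ p₂ = 0}`. -/
theorem fderiv_sin_log_mul_exp_apply (c : ℝ) {G : (Fin 6 → ℝ) → ℝ}
    (hG : ∀ x, x 3 * x 4 ≠ 0 →
      G x = Real.sin (c * Real.log |x 3|) * Real.exp (-((x 3 * x 4) ^ (-2 : ℤ))))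
    {x : Fin 6 → ℝ} (h3 : x 3 ≠ 0) (h4 : x 4 ≠ 0) :
    fderiv ℝ G x (Pi.single 3 (x 3) - Pi.single 4 (x 4)) =
      c * Real.cos (c * Real.log |x 3|) * Real.exp (-((x 3 * x 4) ^ (-2 : ℤ))) := by
  have h34 : x 3 * x 4 ≠ 0 := mul_ne_zero h3 h4
  have hev : G =ᶠ[nhds x] fun y =>
      Real.sin (c * Real.log (y 3)) * Real.exp (-((y 3 * y 4) ^ 2)⁻¹) := by
    have hcont : Continuous fun y : Fin 6 → ℝ => y 3 * y 4 := by fun_prop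
    filter_upwards [hcont.continuousAt.eventually_ne h34] with y hy
    rw [hG y hy, Real.log_abs, zpow_neg]
    rfl
  rw [hev.fderiv_eq]
  have hd : DifferentiableAt ℝ (fun y : Fin 6 → ℝ =>
      Real.sin (c * Real.log (y 3)) * Real.exp (-((y 3 * y 4) ^ 2)⁻¹)) x := by
    fun_prop (disch := positivity)
  rw [← hd.lineDeriv_eq_fderiv]
  refine HasLineDerivAt.lineDeriv ?_
  have hu : HasDerivAt (fun t : ℝ => x 3 + t * x 3) (x 3) 0 := by
    simpa using ((hasDerivAt_id (0 : ℝ)).mul_const (x 3)).const_add (x 3)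
  have hw : HasDerivAt (fun t : ℝ => x 4 + t * -x 4) (-x 4) 0 := by
    simpa using ((hasDerivAt_id (0 : ℝ)).mul_const (-x 4)).const_add (x 4)
  have hsin := ((hu.log (by simpa using h3)).const_mul c).sin
  have hexp := (((hu.mul hw).pow 2).inv (by simpa using ⟨h3, h4⟩)).neg.exp
  have hprod := hsin.mul hexp
  refine (hprod.congr_deriv ?_).congr_of_eventuallyEq (.of_forall fun t => ?_)
  · have hz : (x 3 * x 4) ^ (-2 : ℤ) = ((x 3 * x 4) ^ 2)⁻¹ := by rw [zpow_neg]; rfl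
    rw [hz]
    simp only [Pi.neg_apply, Pi.inv_apply, Pi.pow_apply, Pi.mul_apply, Real.log_abs, zero_mul,
      add_zero, div_self h3]
    ring
  · simp

theorem liouville_integrability_hyperbolic_case (l : ℝ) (hl : 1 < l)
    (H I₂ I₃ : (Fin 6 → ℝ) → ℝ)
    (hH : H = fun x => (1/2) * ((l ^ (x 2) * x 3 + l ^ (-(x 2)) * x 4)^2 + (x 5)^2))
    (hI₂ : I₂ = fun x => x 3 * x 4)
    (hI₃ : I₃ = fun x => if x 3 * x 4 = 0 then 0 else
      Real.sin (2 * Real.pi * Real.log |x 3| / Real.log l) *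
        Real.exp (-((x 3 * x 4) ^ (-2 : ℤ)))) :
    (∀ x, poisson6 H I₂ x = 0) ∧ (∀ x, poisson6 H I₃ x = 0) ∧
    (∀ x, poisson6 I₂ I₃ x = 0) ∧
    ∃ U : Set (Fin 6 → ℝ), IsOpen U ∧ Dense U ∧ ∀ x ∈ U,
      LinearIndependent ℝ ![fderiv ℝ H x, fderiv ℝ I₂ x, fderiv ℝ I₃ x] := by
  have hlog : 0 < Real.log l := Real.log_pos hl
  have hl0 : 0 < l := by linarith
  set c : ℝ := 2 * Real.pi / Real.log l with hc
  have hc0 : c ≠ 0 := by positivity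
  have hHdep : ∀ y z : Fin 6 → ℝ,
      y 2 = z 2 → y 3 = z 3 → y 4 = z 4 → y 5 = z 5 → H y = H z := by
    intro y z h2 h3 h4 h5
    simp only [hH, h2, h3, h4, h5]
  have hI₂dep : ∀ y z : Fin 6 → ℝ, y 3 = z 3 → y 4 = z 4 → I₂ y = I₂ z := by
    intro y z h3 h4
    simp only [hI₂, h3, h4]
  have hI₃dep : ∀ y z : Fin 6 → ℝ, y 3 = z 3 → y 4 = z 4 → I₃ y = I₃ z := by
    intro y z h3 h4
    simp only [hI₃, h3, h4]
  refine ⟨poisson6_eq_zero hHdep hI₂dep, poisson6_eq_zero hHdep hI₃dep,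
    poisson6_eq_zero (fun y z _ h3 h4 _ => hI₂dep y z h3 h4) hI₃dep, ?_⟩
  let S : Fin 6 → Set ℝ :=
    ![Set.univ, Set.univ, Set.univ, cosLogNonvanishing c, {0}ᶜ, {0}ᶜ]
  have hopen : ∀ i, IsOpen (S i) := by
    intro i
    fin_cases i
    exacts [isOpen_univ, isOpen_univ, isOpen_univ, isOpen_cosLogNonvanishing c,
      isOpen_compl_singleton, isOpen_compl_singleton]
  have hdense : ∀ i, Dense (S i) := by
    intro i
    fin_cases i
    exacts [dense_univ, dense_univ, dense_univ, dense_cosLogNonvanishing hc0,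
      dense_compl_singleton 0, dense_compl_singleton 0]
  refine ⟨Set.univ.pi S, isOpen_set_pi Set.finite_univ fun i _ => hopen i,
    dense_pi Set.univ fun i _ => hdense i, fun x hx => ?_⟩
  obtain ⟨h3, hcos⟩ : x 3 ∈ cosLogNonvanishing c := hx 3 trivial
  have h4 : x 4 ≠ 0 := hx 4 trivial
  have h5 : x 5 ≠ 0 := hx 5 trivial
  have hH5 : fderiv ℝ H x (Pi.single 5 1) = x 5 := by
    have hd : DifferentiableAt ℝ H x := by
      rw [hH]
      fun_prop (disch := positivity)
    rw [← hd.lineDeriv_eq_fderiv]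
    refine HasLineDerivAt.lineDeriv ?_
    have hu : HasDerivAt (fun t : ℝ => x 5 + t) 1 0 := (hasDerivAt_id (0 : ℝ)).const_add (x 5)
    have hderiv := (((hu.pow 2).const_add
      ((l ^ (x 2) * x 3 + l ^ (-(x 2)) * x 4) ^ 2)).const_mul (1 / 2 : ℝ))
    refine (hderiv.congr_deriv ?_).congr_of_eventuallyEq (.of_forall fun t => ?_)
    · simp
    · simp [hH]
  have hI₂5 : fderiv ℝ I₂ x (Pi.single 5 1) = 0 :=
    pderiv6_eq_zero_of_independent (fun y z h => hI₂dep y z (h 3 (by decide)) (h 4 (by decide))) x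
  have hI₃5 : fderiv ℝ I₃ x (Pi.single 5 1) = 0 :=
    pderiv6_eq_zero_of_independent (fun y z h => hI₃dep y z (h 3 (by decide)) (h 4 (by decide))) x
  have hI₂v : ∀ v, fderiv ℝ I₂ x v = x 3 * v 4 + x 4 * v 3 := by
    intro v
    have h : HasFDerivAt I₂ (x 3 • ContinuousLinearMap.proj (R := ℝ) (φ := fun _ : Fin 6 => ℝ) 4 +
        x 4 • ContinuousLinearMap.proj (R := ℝ) (φ := fun _ : Fin 6 => ℝ) 3) x := by
      rw [hI₂]
      exact (hasFDerivAt_apply (3 : Fin 6) x).mul (hasFDerivAt_apply (4 : Fin 6) x)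
    rw [h.fderiv]
    simp
  have hI₃v := fderiv_sin_log_mul_exp_apply c (G := I₃) (fun y hy => by
    simp only [hI₃, if_neg hy, hc, div_mul_eq_mul_div]) h3 h4
  rw [Fintype.linearIndependent_iff]
  intro g hg
  have happ : ∀ v, g 0 * fderiv ℝ H x v + g 1 * fderiv ℝ I₂ x v + g 2 * fderiv ℝ I₃ x v = 0 := by
    intro v
    simpa [Fin.sum_univ_three] using DFunLike.congr_fun hg v
  have g0 : g 0 = 0 := by simpa [hH5, hI₂5, hI₃5, h5] using happ (Pi.single 5 1)
  have g2 : g 2 = 0 := by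
    have h := happ (Pi.single 3 (x 3) - Pi.single 4 (x 4))
    rw [g0, hI₃v, hI₂v] at h
    have hne : c * Real.cos (c * Real.log |x 3|) * Real.exp (-((x 3 * x 4) ^ (-2 : ℤ))) ≠ 0 :=
      mul_ne_zero (mul_ne_zero hc0 hcos) (Real.exp_ne_zero _)
    refine (mul_eq_zero.mp ?_).resolve_right hne
    rw [← h]
    simp only [Pi.sub_apply, Pi.single_eq_same, ne_eq, Fin.reduceEq, not_false_eq_true,
      Pi.single_eq_of_ne]
    ring
  have g1 : g 1 = 0 := by simpa [g0, g2, hI₂v, h3] using happ (Pi.single 4 1)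
  intro i
  fin_cases i
  exacts [g0, g1, g2]
end

section
/- Let λ > 1. The function F : ℝ² → ℝ defined by F(x,y) = sin(2π·ln|x|/ln λ)·exp(−(xy)^{−2}) for xy ≠ 0 and F(x,y) = 0 for xy = 0 is infinitely differentiable (of class C^∞) on all of ℝ². -/
open Polynomial in
theorem contDiff_inv_pow_mul_expNegInvGlue (k : ℕ) {n : ℕ∞} :
    ContDiff ℝ n fun x : ℝ => x⁻¹ ^ k * expNegInvGlue x := by
  simpa using expNegInvGlue.contDiff_polynomial_eval_inv_mul (n := n) (X ^ k : ℝ[X])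

theorem continuous_pow_mul_sin_cos_log (w a b : ℝ) (n : ℕ) :
    Continuous fun x : ℝ =>
      x ^ (n + 1) * (a * Real.sin (w * Real.log x) + b * Real.cos (w * Real.log x)) := by
  rw [continuous_iff_continuousAt]
  intro x
  rcases eq_or_ne x 0 with rfl | hx
  · have hlim : Filter.Tendsto (fun x : ℝ => |x| ^ (n + 1) * (|a| + |b|)) (nhds 0) (nhds 0) := by
      have : Continuous fun x : ℝ => |x| ^ (n + 1) * (|a| + |b|) := by fun_prop
      simpa using this.tendsto 0
    rw [ContinuousAt, zero_pow n.succ_ne_zero, zero_mul]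
    refine squeeze_zero_norm (fun x => ?_) hlim
    rw [norm_mul, norm_pow, Real.norm_eq_abs, Real.norm_eq_abs]
    gcongr
    refine (abs_add_le _ _).trans (add_le_add ?_ ?_)
    · rw [abs_mul]
      exact mul_le_of_le_one_right (abs_nonneg a) (Real.abs_sin_le_one _)
    · rw [abs_mul]
      exact mul_le_of_le_one_right (abs_nonneg b) (Real.abs_cos_le_one _)
  · fun_prop (disch := assumption)

theorem hasDerivAt_pow_mul_sin_cos_log (w a b : ℝ) (n : ℕ) (x : ℝ) :
    HasDerivAt
      (fun x : ℝ =>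
        x ^ (n + 2) * (a * Real.sin (w * Real.log x) + b * Real.cos (w * Real.log x)))
      (x ^ (n + 1) * (((n + 2) * a - w * b) * Real.sin (w * Real.log x) +
        ((n + 2) * b + w * a) * Real.cos (w * Real.log x))) x := by
  refine hasDerivAt_of_hasDerivAt_of_ne' (x := 0) (fun y hy => ?_)
    (continuous_pow_mul_sin_cos_log w a b (n + 1)).continuousAt
    (continuous_pow_mul_sin_cos_log w _ _ n).continuousAt x
  have hlog := (Real.hasDerivAt_log hy).const_mul w
  refine ((hasDerivAt_pow (n + 2) y).mul
    ((hlog.sin.const_mul a).add (hlog.cos.const_mul b))).congr_deriv ?_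
  rw [show n + 2 - 1 = n + 1 from rfl, Pi.add_apply]
  push_cast
  field_simp
  ring

theorem contDiff_pow_mul_sin_cos_log (w a b : ℝ) (n : ℕ) :
    ContDiff ℝ n fun x : ℝ =>
      x ^ (n + 1) * (a * Real.sin (w * Real.log x) + b * Real.cos (w * Real.log x)) := by
  induction n generalizing a b with
  | zero => exact contDiff_zero.2 (continuous_pow_mul_sin_cos_log w a b 0)
  | succ n ih =>
    have hderiv := hasDerivAt_pow_mul_sin_cos_log w a b n
    push_cast
    refine contDiff_succ_iff_deriv.2
      ⟨fun x => (hderiv x).differentiableAt, by simp, ?_⟩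
    rw [funext fun x => (hderiv x).deriv]
    exact ih _ _

/-!
STATEMENT 4: For λ > 1, the function F(x,y) = sin(2π ln|x| / ln λ)·exp(−(xy)^{−2})
for xy ≠ 0, extended by F(x,y) = 0 on {xy = 0}, is C^∞ on all of ℝ².
-/

theorem integral_I₃_is_smooth (l : ℝ) (hl : 1 < l) (F : ℝ × ℝ → ℝ)
    (hF : F = fun p => if p.1 * p.2 = 0 then 0 else
      Real.sin (2 * Real.pi * Real.log |p.1| / Real.log l) *
        Real.exp (-((p.1 * p.2) ^ (-2 : ℤ)))) :
    ContDiff ℝ (⊤ : ℕ∞) F := by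
  rw [contDiff_infty]
  intro n
  set w := 2 * Real.pi / Real.log l with hw
  have hfactor : F = fun p : ℝ × ℝ =>
      (p.1 ^ (n + 1) * (1 * Real.sin (w * Real.log p.1) + 0 * Real.cos (w * Real.log p.1))) *
        (p.1 ^ (n + 1) * p.2 ^ (2 * (n + 1))) *
          (((p.1 * p.2) ^ 2)⁻¹ ^ (n + 1) * expNegInvGlue ((p.1 * p.2) ^ 2)) := by
    rw [hF]
    funext p
    by_cases hp : p.1 * p.2 = 0
    · simp [hp]
    · obtain ⟨hx, hy⟩ := mul_ne_zero_iff.1 hp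
      have hpos : ¬ (p.1 * p.2) ^ 2 ≤ 0 := not_le.2 (by positivity)
      have harg : 2 * Real.pi * Real.log |p.1| / Real.log l = w * Real.log p.1 := by
        rw [hw, Real.log_abs]
        ring
      have hzpow : (p.1 * p.2) ^ (-2 : ℤ) = ((p.1 * p.2) ^ 2)⁻¹ := by
        rw [zpow_neg]
        rfl
      have hcancel : p.1 ^ (n + 1) * (p.1 ^ (n + 1) * p.2 ^ (2 * (n + 1))) *
          ((p.1 * p.2) ^ 2)⁻¹ ^ (n + 1) = 1 := by
        calc
          _ = ((p.1 * p.2) ^ 2 * ((p.1 * p.2) ^ 2)⁻¹) ^ (n + 1) := by ring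
          _ = 1 := by rw [mul_inv_cancel₀ (pow_ne_zero 2 hp), one_pow]
      rw [if_neg hp, harg, hzpow, expNegInvGlue, if_neg hpos]
      linear_combination (-Real.sin (w * Real.log p.1) *
        Real.exp (-((p.1 * p.2) ^ 2)⁻¹)) * hcancel
  rw [hfactor]
  have hosc := (contDiff_pow_mul_sin_cos_log w 1 0 n).comp
    (contDiff_fst : ContDiff ℝ n (Prod.fst : ℝ × ℝ → ℝ))
  have hflat := (contDiff_inv_pow_mul_expNegInvGlue (n + 1) (n := n)).comp
    (by fun_prop : ContDiff ℝ n fun p : ℝ × ℝ => (p.1 * p.2) ^ 2)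
  have hmono : ContDiff ℝ n fun p : ℝ × ℝ => p.1 ^ (n + 1) * p.2 ^ (2 * (n + 1)) := by
    fun_prop
  exact (hosc.mul hmono).mul hflat
end

section
/- Let k ∈ {3,4,6} and θ = 2π/k. On ℝ⁶ with coordinates (q₁,q₂,q₃,p₁,p₂,p₃) define H = ½((cos(θq₃)p₁ − sin(θq₃)p₂)² + p₃²), I₂ = p₁² + p₂², and I₃ = Re((p₁ + i·p₂)^k). Then: (i) {H,I₂} = 0, {H,I₃} = 0 and {I₂,I₃} = 0 identically; (ii) dH, dI₂, dI₃ are linearly independent on a dense open subset of ℝ⁶; (iii) with T(q₁,q₂,q₃,p₁,p₂,p₃) = (q₁,q₂,q₃+1, cosθ·p₁ + sinθ·p₂, −sinθ·p₁ + cosθ·p₂, p₃) one has H ∘ T = H, I₂ ∘ T = I₂ and I₃ ∘ T = I₃. All three functions are real-analytic. -/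
/-- The complex momentum `p₁ + i p₂` as a continuous linear map on `ℝ⁶`. -/
noncomputable def complexMomentum : (Fin 6 → ℝ) →L[ℝ] ℂ :=
  Complex.ofRealCLM.comp (ContinuousLinearMap.proj 3) +
    Complex.I • Complex.ofRealCLM.comp (ContinuousLinearMap.proj 4)

theorem complexMomentum_apply (x : Fin 6 → ℝ) :
    complexMomentum x = (x 3 : ℂ) + Complex.I * (x 4 : ℂ) := by
  simp [complexMomentum]

theorem complexMomentum_re (x : Fin 6 → ℝ) : (complexMomentum x).re = x 3 := by
  simp [complexMomentum_apply]

theorem complexMomentum_im (x : Fin 6 → ℝ) : (complexMomentum x).im = x 4 := by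
  simp [complexMomentum_apply]

theorem analyticOnNhd_complexMomentum_pow (k : ℕ) :
    AnalyticOnNhd ℝ (fun x => complexMomentum x ^ k) Set.univ := fun x _ =>
  (complexMomentum.analyticAt x).pow k

theorem fderiv_re_complexMomentum_pow (k : ℕ) (x v : Fin 6 → ℝ) :
    fderiv ℝ (fun x => (complexMomentum x ^ k).re) x v =
      (k * complexMomentum x ^ (k - 1) * complexMomentum v).re := by
  have h := Complex.reCLM.hasFDerivAt.comp x ((complexMomentum.hasFDerivAt (x := x)).pow k)
  have h' : fderiv ℝ (fun x => (complexMomentum x ^ k).re) x = _ := h.fderiv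
  rw [h']
  simp [mul_assoc]

theorem fderiv_normSq_momentum (x v : Fin 6 → ℝ) :
    fderiv ℝ (fun x : Fin 6 → ℝ => x 3 ^ 2 + x 4 ^ 2) x v = 2 * (x 3 * v 3 + x 4 * v 4) := by
  have h := ((hasFDerivAt_apply (𝕜 := ℝ) (3 : Fin 6) x).pow 2).add
    ((hasFDerivAt_apply (𝕜 := ℝ) (4 : Fin 6) x).pow 2)
  have h' : fderiv ℝ (fun x : Fin 6 → ℝ => x 3 ^ 2 + x 4 ^ 2) x = _ := h.fderiv
  rw [h']
  simp
  ring

theorem fderiv_hamiltonian (θ : ℝ) (x v : Fin 6 → ℝ) :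
    fderiv ℝ (fun x : Fin 6 → ℝ => (1 / 2) *
      ((Real.cos (θ * x 2) * x 3 - Real.sin (θ * x 2) * x 4) ^ 2 + x 5 ^ 2)) x v =
      (Real.cos (θ * x 2) * x 3 - Real.sin (θ * x 2) * x 4) *
        (Real.cos (θ * x 2) * v 3 - Real.sin (θ * x 2) * v 4 -
          θ * v 2 * (Real.sin (θ * x 2) * x 3 + Real.cos (θ * x 2) * x 4)) + x 5 * v 5 := by
  have p (i : Fin 6) := hasFDerivAt_apply (𝕜 := ℝ) i x
  have h := ((((((p 2).const_mul θ).cos.mul (p 3)).sub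
    (((p 2).const_mul θ).sin.mul (p 4))).pow 2).add ((p 5).pow 2)).const_mul (1 / 2)
  have h' : fderiv ℝ (fun x : Fin 6 → ℝ => (1 / 2) *
      ((Real.cos (θ * x 2) * x 3 - Real.sin (θ * x 2) * x 4) ^ 2 + x 5 ^ 2)) x = _ := h.fderiv
  rw [h']
  simp
  ring

theorem analyticOnNhd_hamiltonian (θ : ℝ) :
    AnalyticOnNhd ℝ (fun x : Fin 6 → ℝ => (1 / 2) *
      ((Real.cos (θ * x 2) * x 3 - Real.sin (θ * x 2) * x 4) ^ 2 + x 5 ^ 2)) Set.univ := by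
  intro x _
  have p (i : Fin 6) : AnalyticAt ℝ (fun x : Fin 6 → ℝ => x i) x :=
    (ContinuousLinearMap.proj (R := ℝ) (φ := fun _ : Fin 6 => ℝ) i).analyticAt x
  have hθ : AnalyticAt ℝ (fun x : Fin 6 → ℝ => θ * x 2) x := analyticAt_const.mul (p 2)
  have hc : AnalyticAt ℝ (fun x : Fin 6 → ℝ => Real.cos (θ * x 2)) x :=
    Real.analyticAt_cos.comp hθ
  have hs : AnalyticAt ℝ (fun x : Fin 6 → ℝ => Real.sin (θ * x 2)) x :=
    Real.analyticAt_sin.comp hθ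
  exact analyticAt_const.mul ((((hc.mul (p 3)).sub (hs.mul (p 4))).pow 2).add ((p 5).pow 2))

theorem analyticOnNhd_normSq_momentum :
    AnalyticOnNhd ℝ (fun x : Fin 6 → ℝ => x 3 ^ 2 + x 4 ^ 2) Set.univ := by
  intro x _
  have p (i : Fin 6) : AnalyticAt ℝ (fun x : Fin 6 → ℝ => x i) x :=
    (ContinuousLinearMap.proj (R := ℝ) (φ := fun _ : Fin 6 => ℝ) i).analyticAt x
  exact ((p 3).pow 2).add ((p 4).pow 2)

/-- An analytic function on a real normed space that is not identically zero is nonzero on a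
dense set. -/
theorem AnalyticOnNhd.dense_ne_zero {E F : Type*} [NormedAddCommGroup E] [NormedSpace ℝ E]
    [NormedAddCommGroup F] [NormedSpace ℝ F] {f : E → F} (hf : AnalyticOnNhd ℝ f Set.univ)
    {a : E} (ha : f a ≠ 0) : Dense {x | f x ≠ 0} := by
  have hc : {x | f x ≠ 0} = {x | f x = 0}ᶜ := rfl
  rw [hc, ← interior_eq_empty_iff_dense_compl, Set.eq_empty_iff_forall_notMem]
  intro x hx
  exact ha (hf.eqOn_zero_of_preconnected_of_eventuallyEq_zero isPreconnected_univ
    (Set.mem_univ x) (mem_interior_iff_mem_nhds.mp hx) (Set.mem_univ a))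

/-- The three differentials are independent wherever `p₃ ≠ 0` and `Im ((p₁ + i p₂) ^ k) ≠ 0`. -/
theorem linearIndependent_differentials {k : ℕ} (hk : k ≠ 0) (θ : ℝ) {x : Fin 6 → ℝ}
    (hx : x 5 * (complexMomentum x ^ k).im ≠ 0) :
    LinearIndependent ℝ ![
      fderiv ℝ (fun x : Fin 6 → ℝ => (1 / 2) *
        ((Real.cos (θ * x 2) * x 3 - Real.sin (θ * x 2) * x 4) ^ 2 + x 5 ^ 2)) x,
      fderiv ℝ (fun x : Fin 6 → ℝ => x 3 ^ 2 + x 4 ^ 2) x,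
      fderiv ℝ (fun x => (complexMomentum x ^ k).re) x] := by
  obtain ⟨h5, him⟩ := mul_ne_zero_iff.mp hx
  rw [Fintype.linearIndependent_iff]
  intro g hg
  have eval (v : Fin 6 → ℝ) := DFunLike.congr_fun hg v
  simp only [Fin.sum_univ_three, Matrix.cons_val, add_apply, smul_apply, zero_apply,
    fderiv_hamiltonian, fderiv_normSq_momentum,
    fderiv_re_complexMomentum_pow, smul_eq_mul] at eval
  set w : ℂ := k * complexMomentum x ^ (k - 1) with hw
  simp only [Complex.mul_re, complexMomentum_re, complexMomentum_im] at eval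
  have hzw : (complexMomentum x * w).im = k * (complexMomentum x ^ k).im := by
    have : complexMomentum x * w = k * complexMomentum x ^ k := by
      rw [hw, mul_left_comm, mul_pow_sub_one hk]
    simp [this]
  have e5 := eval (Pi.single 5 1)
  have e3 := eval (Pi.single 3 1)
  have e4 := eval (Pi.single 4 1)
  simp [h5] at e5
  simp [e5] at e3 e4
  rw [Complex.mul_im, complexMomentum_re, complexMomentum_im] at hzw
  have hg2 : g 2 = 0 := by
    have h : g 2 * (k * (complexMomentum x ^ k).im) = 0 := by
      rw [← hzw]
      linear_combination x 4 * e3 - x 3 * e4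
    simpa [hk, him] using h
  have hg1 : g 1 = 0 := by
    simp [hg2] at e3 e4
    by_contra h
    simp only [h, false_or] at e3 e4
    exact him (by simp [complexMomentum_apply, e3, e4, hk])
  intro i
  fin_cases i <;> assumption

theorem analytic_integrability_elliptic_case (k : ℕ) (hk : k ∈ ({3, 4, 6} : Set ℕ))
    (θ : ℝ) (hθ : θ = 2 * Real.pi / k)
    (H I₂ I₃ : (Fin 6 → ℝ) → ℝ) (T : (Fin 6 → ℝ) → (Fin 6 → ℝ))
    (hH : H = fun x =>
      (1/2) * ((Real.cos (θ * x 2) * x 3 - Real.sin (θ * x 2) * x 4)^2 + (x 5)^2))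
    (hI₂ : I₂ = fun x => (x 3)^2 + (x 4)^2)
    (hI₃ : I₃ = fun x => (((x 3 : ℂ) + Complex.I * (x 4 : ℂ)) ^ k).re)
    (hT : T = fun x => ![x 0, x 1, x 2 + 1,
      Real.cos θ * x 3 + Real.sin θ * x 4,
      -Real.sin θ * x 3 + Real.cos θ * x 4, x 5]) :
    (∀ x, poisson6 H I₂ x = 0) ∧ (∀ x, poisson6 H I₃ x = 0) ∧
    (∀ x, poisson6 I₂ I₃ x = 0) ∧
    (∃ U : Set (Fin 6 → ℝ), IsOpen U ∧ Dense U ∧ ∀ x ∈ U,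
      LinearIndependent ℝ ![fderiv ℝ H x, fderiv ℝ I₂ x, fderiv ℝ I₃ x]) ∧
    (H ∘ T = H ∧ I₂ ∘ T = I₂ ∧ I₃ ∘ T = I₃) ∧
    (AnalyticOnNhd ℝ H Set.univ ∧ AnalyticOnNhd ℝ I₂ Set.univ ∧
      AnalyticOnNhd ℝ I₃ Set.univ) := by
  have hk0 : k ≠ 0 := by rintro rfl; simp at hk
  have hkθ : k * θ = 2 * Real.pi := by
    rw [hθ]; field_simp
  have hI₃' : I₃ = fun x => (complexMomentum x ^ k).re := by
    simp only [hI₃, complexMomentum_apply]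
  subst hH hI₂ hI₃' hT
  refine ⟨fun x => ?_, fun x => ?_, fun x => ?_, ?_, ⟨?_, ?_, ?_⟩,
    analyticOnNhd_hamiltonian θ, analyticOnNhd_normSq_momentum, fun x hx =>
      (Complex.reCLM.analyticAt _).comp (analyticOnNhd_complexMomentum_pow k x hx)⟩
  · simp only [poisson6, pderiv6, fderiv_hamiltonian, fderiv_normSq_momentum]
    simp [Fin.sum_univ_three]
  · simp only [poisson6, pderiv6, fderiv_hamiltonian, fderiv_re_complexMomentum_pow]
    simp [Fin.sum_univ_three, complexMomentum_apply]
  · simp only [poisson6, pderiv6, fderiv_normSq_momentum, fderiv_re_complexMomentum_pow]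
    simp [Fin.sum_univ_three, complexMomentum_apply]
  · have hf : AnalyticOnNhd ℝ (fun x : Fin 6 → ℝ => x 5 * (complexMomentum x ^ k).im)
        Set.univ := fun x hx =>
      ((ContinuousLinearMap.proj (R := ℝ) (φ := fun _ : Fin 6 => ℝ) 5).analyticAt x).mul
        ((Complex.imCLM.analyticAt _).comp (analyticOnNhd_complexMomentum_pow k x hx))
    refine ⟨{x | x 5 * (complexMomentum x ^ k).im ≠ 0},
      isOpen_ne_fun (continuousOn_univ.mp hf.continuousOn) continuous_const,
      hf.dense_ne_zero (a := (![0, 0, 0, 2, 1, 1] : Fin 6 → ℝ)) ?_,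
      fun x hx => linearIndependent_differentials hk0 θ hx⟩
    simp only [complexMomentum_apply, Matrix.cons_val]
    rcases hk with rfl | rfl | rfl <;> norm_num [pow_succ]
  · funext x
    have hc : Real.cos (θ * x 2) = Real.cos (θ * (x 2 + 1)) * Real.cos θ +
        Real.sin (θ * (x 2 + 1)) * Real.sin θ := by
      rw [← Real.cos_sub]; ring_nf
    have hs : Real.sin (θ * x 2) = Real.sin (θ * (x 2 + 1)) * Real.cos θ -
        Real.cos (θ * (x 2 + 1)) * Real.sin θ := by
      rw [← Real.sin_sub]; ring_nf
    simp only [Function.comp_apply, Matrix.cons_val, hc, hs]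
    ring
  · funext x
    simp only [Function.comp_apply, Matrix.cons_val]
    linear_combination (x 3 ^ 2 + x 4 ^ 2) * Real.sin_sq_add_cos_sq θ
  · funext x
    have hrot : complexMomentum ![x 0, x 1, x 2 + 1,
        Real.cos θ * x 3 + Real.sin θ * x 4,
        -Real.sin θ * x 3 + Real.cos θ * x 4, x 5] =
        Complex.exp (-(θ * Complex.I)) * complexMomentum x := by
      rw [← neg_mul, ← Complex.ofReal_neg, Complex.exp_mul_I, ← Complex.ofReal_cos,
        ← Complex.ofReal_sin]
      apply Complex.ext <;> simp [complexMomentum_apply, add_comm]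
    have hroot : Complex.exp (-(θ * Complex.I)) ^ k = 1 := by
      rw [← Complex.exp_nat_mul, mul_neg, ← mul_assoc, Complex.exp_neg]
      have : (k : ℂ) * θ = 2 * Real.pi := by exact_mod_cast hkθ
      rw [this, Complex.exp_two_pi_mul_I, inv_one]
    simp only [Function.comp_apply, hrot, mul_pow, hroot, one_mul]
end

section
/- On ℝ⁶ with coordinates (q₁,q₂,q₃,p₁,p₂,p₃) define H = ½(((cos(2πq₃) − q₃·sin(2πq₃))p₁ + sin(2πq₃)p₂)² + p₃²), I₂ = p₁, and I₃ = sin(2πp₂/p₁)·exp(−p₁^{−2}) for p₁ ≠ 0, extended by 0 on {p₁ = 0}. Then: (i) I₃ is of class C^∞ on ℝ⁶; (ii) {H,I₂} = 0, {H,I₃} = 0 and {I₂,I₃} = 0 identically; (iii) with T(q₁,q₂,q₃,p₁,p₂,p₃) = (q₁,q₂,q₃+1, p₁, p₁+p₂, p₃) one has H ∘ T = H, I₂ ∘ T = I₂ and I₃ ∘ T = I₃; (iv) dH, dI₂, dI₃ are linearly independent on a dense open subset of ℝ⁶. -/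
/-- The smooth extension by zero to `{v = 0}` of
`u ^ j * v ^ (-k) * sin (2πu/v + c) * exp (-v ^ (-2))` on the plane. -/
noncomputable def flatSine (j k : ℕ) (c : ℝ) (z : ℝ × ℝ) : ℝ :=
  z.1 ^ j * Real.sin (2 * Real.pi * z.1 * z.2⁻¹ + c) *
    ((z.2⁻¹) ^ k * expNegInvGlue (z.2 ^ 2))

lemma continuous_inv_pow_mul_expNegInvGlue_sq (k : ℕ) :
    Continuous fun v : ℝ => (v⁻¹) ^ k * expNegInvGlue (v ^ 2) := by
  have h := (expNegInvGlue.continuous_polynomial_eval_inv_mul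
    (Polynomial.X ^ k : Polynomial ℝ)).comp (continuous_pow 2 (M := ℝ))
  refine ((continuous_pow k (M := ℝ)).mul h).congr fun v => ?_
  by_cases hv : v = 0
  · simp [hv, expNegInvGlue.zero]
  · simp only [Pi.mul_apply, Function.comp_apply, Polynomial.eval_pow, Polynomial.eval_X]
    rw [← mul_assoc, ← mul_pow]
    congr 2
    field_simp

lemma flatSine_of_snd_eq_zero (j k : ℕ) (c : ℝ) {z : ℝ × ℝ} (hz : z.2 = 0) :
    flatSine j k c z = 0 := by
  simp [flatSine, hz, expNegInvGlue.zero]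

lemma flatSine_eq_snd_mul (j k : ℕ) (c : ℝ) (z : ℝ × ℝ) :
    flatSine j k c z = z.2 * flatSine j (k + 1) c z := by
  by_cases hz : z.2 = 0
  · simp [hz, flatSine_of_snd_eq_zero]
  · simp only [flatSine, pow_succ]
    field_simp

lemma continuousAt_flatSine_of_snd_eq_zero (j k : ℕ) (c : ℝ) {z : ℝ × ℝ} (hz : z.2 = 0) :
    ContinuousAt (flatSine j k c) z := by
  have hb : Filter.Tendsto
      (fun w : ℝ × ℝ => |w.1 ^ j| * |(w.2⁻¹) ^ k * expNegInvGlue (w.2 ^ 2)|)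
      (nhds z) (nhds 0) := by
    have hc : Continuous
        (fun w : ℝ × ℝ => |w.1 ^ j| * |(w.2⁻¹) ^ k * expNegInvGlue (w.2 ^ 2)|) :=
      (continuous_fst.pow j).abs.mul
        ((continuous_inv_pow_mul_expNegInvGlue_sq k).comp continuous_snd).abs
    simpa [hz, expNegInvGlue.zero] using hc.tendsto z
  rw [ContinuousAt, flatSine_of_snd_eq_zero j k c hz]
  refine squeeze_zero_norm (fun w => ?_) hb
  rw [flatSine, Real.norm_eq_abs, abs_mul, abs_mul]
  gcongr
  exact mul_le_of_le_one_right (abs_nonneg _) (Real.abs_sin_le_one _)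

lemma hasFDerivAt_flatSine (j k : ℕ) (c : ℝ) (z : ℝ × ℝ) :
    HasFDerivAt (flatSine j k c)
      ((j * flatSine (j - 1) k c z + 2 * Real.pi * flatSine j (k + 1) (c + Real.pi / 2) z) •
          ContinuousLinearMap.fst ℝ ℝ ℝ +
        (-k * flatSine j (k + 1) c z
            - 2 * Real.pi * flatSine (j + 1) (k + 2) (c + Real.pi / 2) z
            + 2 * flatSine j (k + 3) c z) • ContinuousLinearMap.snd ℝ ℝ ℝ) z := by
  by_cases hz : z.2 = 0
  · simp only [flatSine_of_snd_eq_zero _ _ _ hz, mul_zero, add_zero, sub_zero, zero_smul]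
    rw [hasFDerivAt_iff_isLittleO, flatSine_of_snd_eq_zero _ _ _ hz]
    have h1 : (fun w : ℝ × ℝ => w.2) =O[nhds z] fun w => w - z := by
      refine Asymptotics.IsBigO.of_bound 1 (Filter.Eventually.of_forall fun w => ?_)
      simpa [hz] using norm_snd_le (w - z)
    have h2 : flatSine j (k + 1) c =o[nhds z] fun _ => (1 : ℝ) := by
      rw [Asymptotics.isLittleO_one_iff]
      simpa [flatSine_of_snd_eq_zero _ _ _ hz] using
        (continuousAt_flatSine_of_snd_eq_zero j (k + 1) c hz).tendsto
    have h3 := h1.norm_right.mul_isLittleO h2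
    simpa [← flatSine_eq_snd_mul] using h3
  · have hE : ∀ᶠ w : ℝ × ℝ in nhds z, flatSine j k c w =
        w.1 ^ j * Real.sin (2 * Real.pi * w.1 * w.2⁻¹ + c) *
          ((w.2⁻¹) ^ k * Real.exp (-(w.2⁻¹) ^ 2)) := by
      filter_upwards [continuous_snd.continuousAt.eventually_ne hz] with w hw
      have : 0 < w.2 ^ 2 := by positivity
      simp [flatSine, expNegInvGlue, this.not_ge]
    have hu : HasFDerivAt (fun w : ℝ × ℝ => w.1) (ContinuousLinearMap.fst ℝ ℝ ℝ) z :=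
      hasFDerivAt_fst
    have hv : HasFDerivAt (fun w : ℝ × ℝ => w.2⁻¹)
        ((-(z.2 ^ 2)⁻¹) • ContinuousLinearMap.snd ℝ ℝ ℝ) z :=
      (hasDerivAt_inv hz).comp_hasFDerivAt z hasFDerivAt_snd
    have hd := ((hu.pow j).mul ((((hu.const_mul (2 * Real.pi)).mul hv).add_const c).sin)).mul
      ((hv.pow k).mul ((hv.pow 2).neg.exp))
    refine (hd.congr_of_eventuallyEq hE).congr_fderiv ?_
    have hpos : 0 < z.2 ^ 2 := by positivity
    have hk : (k : ℝ) * z.2⁻¹ ^ (k - 1) * z.2⁻¹ = k * z.2⁻¹ ^ k := by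
      cases k <;> simp [pow_succ, mul_assoc]
    ext
    · simp [flatSine, expNegInvGlue, hpos.not_ge, ← add_assoc, Real.sin_add_pi_div_two]
      ring
    · simp [flatSine, expNegInvGlue, hpos.not_ge, ← add_assoc, Real.sin_add_pi_div_two]
      linear_combination (-z.1 ^ j * Real.sin (2 * Real.pi * z.1 * z.2⁻¹ + c)
        * Real.exp (-(z.2 ^ 2)⁻¹) * z.2⁻¹) * hk

lemma contDiff_flatSine (n : ℕ) (j k : ℕ) (c : ℝ) : ContDiff ℝ n (flatSine j k c) := by
  induction n generalizing j k c with
  | zero =>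
    exact contDiff_zero.2 (continuous_iff_continuousAt.2 fun z =>
      (hasFDerivAt_flatSine j k c z).continuousAt)
  | succ n ih =>
    push_cast
    refine contDiff_succ_iff_hasFDerivAt.2 ⟨_, ?_, hasFDerivAt_flatSine j k c⟩
    exact ((((contDiff_const.mul (ih _ _ _)).add (contDiff_const.mul (ih _ _ _))).smul
      contDiff_const).add ((((contDiff_const.mul (ih _ _ _)).sub
        (contDiff_const.mul (ih _ _ _))).add (contDiff_const.mul (ih _ _ _))).smul
          contDiff_const))

/-- A partial derivative vanishes for a function that does not depend on that coordinate. -/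
lemma pderiv6_eq_zero {i : Fin 6} {F : (Fin 6 → ℝ) → ℝ} {x : Fin 6 → ℝ}
    (h : ∀ t : ℝ, F (x + t • Pi.single i 1) = F x) : pderiv6 i F x = 0 := by
  by_cases hF : DifferentiableAt ℝ F x
  · rw [pderiv6, ← hF.lineDeriv_eq_fderiv, lineDeriv]
    simp [h]
  · simp [pderiv6, fderiv_zero_of_not_differentiableAt hF]

lemma ite_sin_mul_exp_eq_flatSine (u v : ℝ) :
    (if v = 0 then 0 else
      Real.sin (2 * Real.pi * u / v) * Real.exp (-(v ^ (-2 : ℤ)))) = flatSine 0 0 0 (u, v) := by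
  by_cases hv : v = 0
  · simp [hv, flatSine_of_snd_eq_zero]
  · have : 0 < v ^ 2 := by positivity
    simp [hv, flatSine, expNegInvGlue, this.not_ge, div_eq_mul_inv]

lemma dense_ne_zero_and_cos_ne_zero :
    Dense {x : Fin 6 → ℝ | (x 3 ≠ 0 ∧ x 5 ≠ 0) ∧ Real.cos (2 * Real.pi * x 4 / x 3) ≠ 0} := by
  have along {x w : Fin 6 → ℝ} {S : Set (Fin 6 → ℝ)}
      (h : ∀ᶠ t : ℝ in nhdsWithin 0 {0}ᶜ, x + t • w ∈ S) : x ∈ closure S := by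
    have hc : Filter.Tendsto (fun t : ℝ => x + t • w) (nhdsWithin 0 {0}ᶜ) (nhds x) := by
      have : Continuous fun t : ℝ => x + t • w := by fun_prop
      simpa using (this.tendsto 0).mono_left nhdsWithin_le_nhds
    exact mem_closure_of_tendsto hc h
  have hW : Dense {x : Fin 6 → ℝ | x 3 ≠ 0 ∧ x 5 ≠ 0} := by
    intro x
    refine along (w := Pi.single 3 1 + Pi.single 5 1) ?_
    have h (i : Fin 6) : ∀ᶠ t : ℝ in nhdsWithin 0 {0}ᶜ, x i + t ≠ 0 :=
      ((hasDerivAt_id (0 : ℝ)).const_add (x i)).eventually_ne one_ne_zero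
    filter_upwards [h 3, h 5] with t h3 h5
    simpa using ⟨h3, h5⟩
  refine dense_closure.1 (hW.mono ?_)
  rintro x ⟨h3, h5⟩
  by_cases hcos : Real.cos (2 * Real.pi * x 4 / x 3) = 0
  · refine along (w := Pi.single 4 1) ?_
    have hd : HasDerivAt (fun t : ℝ => Real.cos (2 * Real.pi * (x 4 + t) / x 3))
        (-Real.sin (2 * Real.pi * x 4 / x 3) * (2 * Real.pi / x 3)) 0 := by
      simpa using ((((hasDerivAt_id (0 : ℝ)).const_add (x 4)).const_mul
        (2 * Real.pi)).div_const (x 3)).cos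
    have hsin : Real.sin (2 * Real.pi * x 4 / x 3) ≠ 0 := fun h => by
      simpa [h, hcos] using Real.sin_sq_add_cos_sq (2 * Real.pi * x 4 / x 3)
    have hne : -Real.sin (2 * Real.pi * x 4 / x 3) * (2 * Real.pi / x 3) ≠ 0 :=
      mul_ne_zero (neg_ne_zero.2 hsin) (div_ne_zero Real.two_pi_pos.ne' h3)
    filter_upwards [hd.eventually_ne (c := 0) hne] with t ht
    simpa [h3, h5] using ht
  · exact subset_closure ⟨⟨h3, h5⟩, hcos⟩

lemma isOpen_ne_zero_and_cos_ne_zero :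
    IsOpen {x : Fin 6 → ℝ | (x 3 ≠ 0 ∧ x 5 ≠ 0) ∧ Real.cos (2 * Real.pi * x 4 / x 3) ≠ 0} := by
  rw [isOpen_iff_mem_nhds]
  rintro x ⟨⟨h3, h5⟩, hcos⟩
  have hc : ContinuousAt (fun x : Fin 6 → ℝ => Real.cos (2 * Real.pi * x 4 / x 3)) x := by
    fun_prop (disch := assumption)
  filter_upwards [(continuous_apply 3).continuousAt.eventually_ne h3,
    (continuous_apply 5).continuousAt.eventually_ne h5, hc.eventually_ne hcos] with y h3 h5 h4
  exact ⟨⟨h3, h5⟩, h4⟩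

theorem smooth_integrability_jordan_box_case
    (H I₂ I₃ : (Fin 6 → ℝ) → ℝ) (T : (Fin 6 → ℝ) → (Fin 6 → ℝ))
    (hH : H = fun x => (1/2) *
      (((Real.cos (2 * Real.pi * x 2) - x 2 * Real.sin (2 * Real.pi * x 2)) * x 3 +
          Real.sin (2 * Real.pi * x 2) * x 4)^2 + (x 5)^2))
    (hI₂ : I₂ = fun x => x 3)
    (hI₃ : I₃ = fun x => if x 3 = 0 then 0 else
      Real.sin (2 * Real.pi * x 4 / x 3) * Real.exp (-((x 3) ^ (-2 : ℤ))))
    (hT : T = fun x => ![x 0, x 1, x 2 + 1, x 3, x 3 + x 4, x 5]) :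
    ContDiff ℝ (⊤ : ℕ∞) I₃ ∧
    ((∀ x, poisson6 H I₂ x = 0) ∧ (∀ x, poisson6 H I₃ x = 0) ∧
      (∀ x, poisson6 I₂ I₃ x = 0)) ∧
    (H ∘ T = H ∧ I₂ ∘ T = I₂ ∧ I₃ ∘ T = I₃) ∧
    (∃ U : Set (Fin 6 → ℝ), IsOpen U ∧ Dense U ∧ ∀ x ∈ U,
      LinearIndependent ℝ ![fderiv ℝ H x, fderiv ℝ I₂ x, fderiv ℝ I₃ x]) := by
  have hI₃' : I₃ = fun x => flatSine 0 0 0 (x 4, x 3) := by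
    rw [hI₃]
    exact funext fun x => ite_sin_mul_exp_eq_flatSine (x 4) (x 3)
  have H_zero (x) : pderiv6 0 H x = 0 := pderiv6_eq_zero fun t => by simp [hH]
  have H_one (x) : pderiv6 1 H x = 0 := pderiv6_eq_zero fun t => by simp [hH]
  have I₂_ne (i : Fin 6) (hi : i ≠ 3) (x) : pderiv6 i I₂ x = 0 :=
    pderiv6_eq_zero fun t => by simp [hI₂, hi.symm]
  have I₃_ne (i : Fin 6) (h3 : i ≠ 3) (h4 : i ≠ 4) (x) : pderiv6 i I₃ x = 0 :=
    pderiv6_eq_zero fun t => by simp [hI₃', h3.symm, h4.symm]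
  refine ⟨?_, ⟨fun x => ?_, fun x => ?_, fun x => ?_⟩, ⟨?_, ?_, ?_⟩,
    _, isOpen_ne_zero_and_cos_ne_zero, dense_ne_zero_and_cos_ne_zero, ?_⟩
  · rw [hI₃', contDiff_infty]
    exact fun n => (contDiff_flatSine n 0 0 0).comp
      ((contDiff_apply ℝ ℝ 4).prodMk (contDiff_apply ℝ ℝ 3))
  · simp [poisson6, Fin.sum_univ_three, H_zero, I₂_ne]
  · simp [poisson6, Fin.sum_univ_three, H_zero, H_one, I₃_ne]
  · simp [poisson6, Fin.sum_univ_three, I₂_ne, I₃_ne]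
  · funext x
    simp only [hH, hT, Function.comp_apply, Matrix.cons_val, mul_add, mul_one,
      Real.cos_add_two_pi, Real.sin_add_two_pi]
    ring
  · funext x
    simp [hI₂, hT]
  · funext x
    by_cases h3 : x 3 = 0
    · simp [hI₃, hT, h3]
    · have : 2 * Real.pi * (x 3 + x 4) / x 3 = 2 * Real.pi * x 4 / x 3 + 2 * Real.pi := by
        field_simp
        ring
      simp [hI₃, hT, h3, this]
  · rintro x ⟨⟨h3, h5⟩, hcos⟩
    have H_five : pderiv6 5 H x = x 5 := by
      have hdiff : DifferentiableAt ℝ H x := by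
        rw [hH]
        fun_prop
      have hd : HasDerivAt (fun t : ℝ => H (x + t • Pi.single 5 1)) (x 5) 0 := by
        have h := ((((hasDerivAt_id (0 : ℝ)).const_add (x 5)).pow 2).const_add
          (((Real.cos (2 * Real.pi * x 2) - x 2 * Real.sin (2 * Real.pi * x 2)) * x 3 +
            Real.sin (2 * Real.pi * x 2) * x 4) ^ 2)).const_mul (1 / 2)
        simpa [hH] using h
      rw [pderiv6, ← hdiff.lineDeriv_eq_fderiv]
      exact hd.deriv
    have I₂_three : pderiv6 3 I₂ x = 1 := by
      have hd := hasFDerivAt_apply (𝕜 := ℝ) (3 : Fin 6) x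
      rw [pderiv6, hI₂, hd.fderiv]
      simp
    have I₃_four : pderiv6 4 I₃ x ≠ 0 := by
      have hp := (hasFDerivAt_apply (𝕜 := ℝ) (4 : Fin 6) x).prodMk
        (hasFDerivAt_apply (𝕜 := ℝ) (3 : Fin 6) x)
      have hd : HasFDerivAt (fun y : Fin 6 → ℝ => flatSine 0 0 0 (y 4, y 3)) _ x :=
        HasFDerivAt.comp (g := flatSine 0 0 0) x (hasFDerivAt_flatSine 0 0 0 (x 4, x 3)) hp
      rw [div_eq_mul_inv] at hcos
      rw [pderiv6, hI₃', hd.fderiv]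
      simp [flatSine, Real.sin_add_pi_div_two, hcos, h3]
    rw [Fintype.linearIndependent_iff]
    intro g hg
    have hev (i : Fin 6) :
        g 0 * pderiv6 i H x + g 1 * pderiv6 i I₂ x + g 2 * pderiv6 i I₃ x = 0 := by
      simpa [Fin.sum_univ_three, pderiv6] using DFunLike.congr_fun hg (Pi.single i 1)
    have g0 : g 0 = 0 := by simpa [H_five, I₂_ne, I₃_ne, h5] using hev 5
    have g2 : g 2 = 0 := by simpa [g0, I₂_ne, I₃_four] using hev 4
    have g1 : g 1 = 0 := by simpa [g0, g2, I₂_three] using hev 3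
    intro i
    fin_cases i <;> assumption
end

section
/- Let λ > 1 and a = ln λ. Define vector fields on ℝ³ by ξ₁(x,y,t) = (λ^t, λ^{−t}, 0), ξ₂(x,y,t) = (0,0,1) and v(x,y,t) = a·(λ^t, −λ^{−t}, 0). Then the Lie brackets satisfy [ξ₂, ξ₁] = v, [v, ξ₁] = 0 and [v, ξ₂] = −a²·ξ₁ identically on ℝ³. In particular v is an infinitesimal symmetry of the plane distribution spanned by ξ₁ and ξ₂ (its bracket with each of ξ₁, ξ₂ lies pointwise in their span). -/
/-!
STATEMENT 8: For λ > 1 and a = ln λ, the vector fields on ℝ³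
ξ₁(x,y,t) = (λ^t, λ^{−t}, 0), ξ₂(x,y,t) = (0,0,1), v(x,y,t) = a·(λ^t, −λ^{−t}, 0)
satisfy [ξ₂,ξ₁] = v, [v,ξ₁] = 0, [v,ξ₂] = −a²·ξ₁; in particular v (the Reeb field)
is an infinitesimal symmetry of the plane distribution spanned by ξ₁, ξ₂.
-/

/-- The Lie bracket of two vector fields on `ℝ³ = ℝ × ℝ × ℝ`, defined pointwise by
`[X,Y](p) = DY(p)·X(p) − DX(p)·Y(p)`. -/
noncomputable def lieBracketR3 (X Y : ℝ × ℝ × ℝ → ℝ × ℝ × ℝ) : ℝ × ℝ × ℝ → ℝ × ℝ × ℝ :=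
  fun p => fderiv ℝ Y p (X p) - fderiv ℝ X p (Y p)

/-- The derivative of a map on `ℝ³` that depends only on the last coordinate. -/
theorem fderiv_comp_snd_snd {g : ℝ → ℝ × ℝ × ℝ} {g' : ℝ × ℝ × ℝ} {p : ℝ × ℝ × ℝ}
    (hg : HasDerivAt g g' p.2.2) (w : ℝ × ℝ × ℝ) :
    fderiv ℝ (fun q : ℝ × ℝ × ℝ => g q.2.2) p w = w.2.2 • g' := by
  have hsnd : HasFDerivAt (fun q : ℝ × ℝ × ℝ => q.2.2)
      ((ContinuousLinearMap.snd ℝ ℝ ℝ).comp (ContinuousLinearMap.snd ℝ ℝ (ℝ × ℝ))) p :=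
    ((ContinuousLinearMap.snd ℝ ℝ ℝ).comp (ContinuousLinearMap.snd ℝ ℝ (ℝ × ℝ))).hasFDerivAt
  have h := hg.hasFDerivAt.comp p hsnd
  change fderiv ℝ (g ∘ fun q : ℝ × ℝ × ℝ => q.2.2) p w = _
  rw [h.fderiv]
  simp

theorem reeb_field_is_symmetry (l : ℝ) (hl : 1 < l) (a : ℝ) (ha : a = Real.log l)
    (ξ₁ ξ₂ v : ℝ × ℝ × ℝ → ℝ × ℝ × ℝ)
    (hξ₁ : ξ₁ = fun p => (l ^ p.2.2, l ^ (-p.2.2), 0))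
    (hξ₂ : ξ₂ = fun _ => (0, 0, 1))
    (hv : v = fun p => a • ((l ^ p.2.2, -(l ^ (-p.2.2)), 0) : ℝ × ℝ × ℝ)) :
    lieBracketR3 ξ₂ ξ₁ = v ∧
    lieBracketR3 v ξ₁ = 0 ∧
    lieBracketR3 v ξ₂ = (fun p => (-(a^2)) • ξ₁ p) ∧
    (∀ p : ℝ × ℝ × ℝ,
      lieBracketR3 v ξ₁ p ∈ Submodule.span ℝ {ξ₁ p, ξ₂ p} ∧
      lieBracketR3 v ξ₂ p ∈ Submodule.span ℝ {ξ₁ p, ξ₂ p}) := by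
  have hl0 : 0 < l := one_pos.trans hl
  have hpos (t : ℝ) : HasDerivAt (fun s : ℝ => l ^ s) (a * l ^ t) t := by
    simpa [ha, mul_comm] using (hasDerivAt_id t).const_rpow hl0
  have hneg (t : ℝ) : HasDerivAt (fun s : ℝ => l ^ (-s)) (-(a * l ^ (-t))) t := by
    simpa [ha, mul_comm] using (hasDerivAt_neg t).const_rpow hl0
  have hDξ₁ (p w : ℝ × ℝ × ℝ) :
      fderiv ℝ ξ₁ p w = w.2.2 • (a * l ^ p.2.2, -(a * l ^ (-p.2.2)), 0) := by
    rw [hξ₁]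
    exact fderiv_comp_snd_snd
      ((hpos p.2.2).prodMk ((hneg p.2.2).prodMk (hasDerivAt_const p.2.2 (0 : ℝ)))) w
  have hDv (p w : ℝ × ℝ × ℝ) :
      fderiv ℝ v p w = w.2.2 • a • (a * l ^ p.2.2, - -(a * l ^ (-p.2.2)), 0) := by
    rw [hv]
    exact fderiv_comp_snd_snd
      (((hpos p.2.2).prodMk
        ((hneg p.2.2).neg.prodMk (hasDerivAt_const p.2.2 (0 : ℝ)))).const_smul a) w
  have hDξ₂ (p w : ℝ × ℝ × ℝ) : fderiv ℝ ξ₂ p w = 0 := by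
    simp [hξ₂]
  have hvξ₁ : lieBracketR3 v ξ₁ = 0 := by
    funext p
    simp only [lieBracketR3, hDξ₁, hDv]
    simp [hξ₁, hv]
  have hvξ₂ : lieBracketR3 v ξ₂ = fun p => (-(a ^ 2)) • ξ₁ p := by
    funext p
    simp only [lieBracketR3, hDξ₂, hDv]
    ext <;> simp [hξ₁, hξ₂] <;> ring
  refine ⟨?_, hvξ₁, hvξ₂, fun p => ⟨?_, ?_⟩⟩
  · funext p
    simp only [lieBracketR3, hDξ₁, hDξ₂]
    simp [hξ₂, hv]
  · simp [hvξ₁]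
  · rw [hvξ₂]
    exact Submodule.smul_mem _ _ (Submodule.subset_span (Set.mem_insert _ _))
end

section
/- Every real Lie algebra of dimension 3 that is not semisimple contains a 2-dimensional abelian Lie subalgebra, i.e. a Lie subalgebra K with dim K = 2 on which the Lie bracket vanishes identically. -/
open Module

section

variable {F L : Type*} [Field F] [LieRing L] [LieAlgebra F L]

/-- Two linearly independent commuting elements span a two-dimensional abelian subalgebra. -/
theorem exists_abelian_subalgebra_of_lie_eq_zero {x y : L}
    (hxy : LinearIndependent F ![x, y]) (h : ⁅x, y⁆ = 0) :
    ∃ K : LieSubalgebra F L, finrank F K = 2 ∧ ∀ u ∈ K, ∀ v ∈ K, ⁅u, v⁆ = 0 := by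
  have h' : ⁅y, x⁆ = 0 := by rw [← lie_skew, h, neg_zero]
  have comm : ∀ u ∈ Submodule.span F {x, y}, ∀ v ∈ Submodule.span F {x, y}, ⁅u, v⁆ = 0 := by
    intro u hu v hv
    obtain ⟨a, b, rfl⟩ := Submodule.mem_span_pair.mp hu
    obtain ⟨c, d, rfl⟩ := Submodule.mem_span_pair.mp hv
    simp [h, h']
  refine ⟨{ Submodule.span F {x, y} with
    lie_mem' := fun {u v} hu hv => ?_ }, ?_, comm⟩
  · have := comm u hu v hv
    simp [this]
  · change finrank F (Submodule.span F {x, y}) = 2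
    rw [← Matrix.range_cons_cons_empty x y ![], finrank_span_eq_card hxy, Fintype.card_fin]

/-- If `x ≠ 0` spans an ideal of a Lie algebra of dimension at least three, then the centralizer
of `x` contains a two-dimensional abelian subalgebra. -/
theorem exists_abelian_subalgebra_of_lie_mem_span_singleton [Module.Finite F L]
    (hdim : 3 ≤ finrank F L) {x : L} (hx : x ≠ 0) (h : ∀ y : L, ⁅x, y⁆ ∈ F ∙ x) :
    ∃ K : LieSubalgebra F L, finrank F K = 2 ∧ ∀ u ∈ K, ∀ v ∈ K, ⁅u, v⁆ = 0 := by
  let f : L →ₗ[F] L := LieAlgebra.ad F L x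
  have hrange : LinearMap.range f ≤ F ∙ x := by
    rintro _ ⟨y, rfl⟩
    exact h y
  have hspan : finrank F (F ∙ x) = 1 := finrank_span_singleton hx
  have hrank := Submodule.finrank_mono hrange
  have hadd := f.finrank_range_add_finrank_ker
  have hker : ¬ LinearMap.ker f ≤ F ∙ x := fun hle => by
    have := Submodule.finrank_mono hle
    omega
  obtain ⟨y, hy, hyx⟩ := SetLike.not_le_iff_exists.mp hker
  refine exists_abelian_subalgebra_of_lie_eq_zero (x := x) (y := y) ?_ hy
  rw [LinearIndependent.pair_iff' hx]
  exact fun a ha => hyx (Submodule.mem_span_singleton.mpr ⟨a, ha⟩)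

/-- The derived algebra of a two-dimensional ideal with basis `a, b` is the ideal spanned by
`⁅a, b⁆`. -/
theorem lie_mem_span_lie_of_ideal_eq_span_pair {I : LieIdeal F L} {a b : L}
    (hI : I.toSubmodule = Submodule.span F {a, b}) (y : L) :
    ⁅⁅a, b⁆, y⁆ ∈ F ∙ ⁅a, b⁆ := by
  have key : ∀ u ∈ I, ∃ p q : F, p • a + q • b = u := fun u hu =>
    Submodule.mem_span_pair.mp (hI ▸ (show u ∈ I.toSubmodule from hu))
  have ha : a ∈ I.toSubmodule := hI ▸ Submodule.subset_span (by simp)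
  have hb : b ∈ I.toSubmodule := hI ▸ Submodule.subset_span (by simp)
  obtain ⟨p, q, hpq⟩ := key _ (I.lie_mem (x := y) ha)
  obtain ⟨r, s, hrs⟩ := key _ (I.lie_mem (x := y) hb)
  refine Submodule.mem_span_singleton.mpr ⟨-(p + s), ?_⟩
  rw [← lie_skew ⁅a, b⁆ y, leibniz_lie, ← hpq, ← hrs]
  simp only [add_lie, lie_add, smul_lie, lie_smul, lie_self, smul_zero, add_zero, zero_add]
  module

/-- A three-dimensional Lie algebra which is not simple has a two-dimensional abelian
subalgebra. -/
theorem exists_abelian_subalgebra_of_not_isSimple [Module.Finite F L]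
    (hdim : finrank F L = 3) (hL : ¬ LieAlgebra.IsSimple F L) :
    ∃ K : LieSubalgebra F L, finrank F K = 2 ∧ ∀ u ∈ K, ∀ v ∈ K, ⁅u, v⁆ = 0 := by
  by_cases hab : IsLieAbelian L
  · have : Nontrivial L := nontrivial_of_finrank_pos (R := F) (by omega)
    obtain ⟨x, hx⟩ := exists_ne (0 : L)
    exact exists_abelian_subalgebra_of_lie_mem_span_singleton hdim.ge hx fun y => by
      simp [trivial_lie_zero]
  · obtain ⟨I, hbot, htop⟩ : ∃ I : LieIdeal F L, I ≠ ⊥ ∧ I ≠ ⊤ := by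
      by_contra! hI
      exact hL ⟨fun I => or_iff_not_imp_left.mpr (hI I), hab⟩
    have hpos : finrank F I.toSubmodule ≠ 0 := fun h0 =>
      hbot ((LieSubmodule.toSubmodule_eq_bot I).mp (Submodule.finrank_eq_zero.mp h0))
    have hlt : finrank F I.toSubmodule < 3 := hdim ▸ Submodule.finrank_lt fun h =>
      htop ((LieSubmodule.toSubmodule_eq_top I).mp h)
    obtain h1 | h2 : finrank F I.toSubmodule = 1 ∨ finrank F I.toSubmodule = 2 := by omega
    · obtain ⟨⟨x, hxI⟩, hx, hspan⟩ := finrank_eq_one_iff'.mp h1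
      refine exists_abelian_subalgebra_of_lie_mem_span_singleton hdim.ge (x := x)
        (fun h => hx (Subtype.ext h)) fun y => ?_
      obtain ⟨c, hc⟩ := hspan ⟨⁅x, y⁆, lie_mem_left F L I x y hxI⟩
      exact Submodule.mem_span_singleton.mpr ⟨c, congrArg Subtype.val hc⟩
    · let e := finBasisOfFinrankEq F I.toSubmodule h2
      have hli : LinearIndependent F ![(e 0 : L), (e 1 : L)] := by
        have he : ![(e 0 : L), (e 1 : L)] = I.toSubmodule.subtype ∘ e := by
          ext i
          fin_cases i <;> rfl
        rw [he]
        exact e.linearIndependent.map' _ (Submodule.ker_subtype _)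
      have hI : I.toSubmodule = Submodule.span F {(e 0 : L), (e 1 : L)} := by
        have := congrArg (Submodule.map I.toSubmodule.subtype) e.span_eq
        rw [Submodule.map_span, Submodule.map_subtype_top, ← Set.range_comp] at this
        refine this.symm.trans ?_
        congr 1
        ext z
        simp [Fin.exists_fin_two, eq_comm]
      by_cases h0 : ⁅(e 0 : L), (e 1 : L)⁆ = 0
      · exact exists_abelian_subalgebra_of_lie_eq_zero hli h0
      · exact exists_abelian_subalgebra_of_lie_mem_span_singleton hdim.ge h0
          (lie_mem_span_lie_of_ideal_eq_span_pair hI)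

end


/-!
STATEMENT 10: Every 3-dimensional real Lie algebra that is not semisimple contains
a 2-dimensional abelian Lie subalgebra.
-/

theorem nonsemisimple_dim3_has_abelian_2dim_subalgebra
    (L : Type*) [LieRing L] [LieAlgebra ℝ L] [Module.Finite ℝ L]
    (hdim : Module.finrank ℝ L = 3)
    (hss : ¬ LieAlgebra.IsSemisimple ℝ L) :
    ∃ K : LieSubalgebra ℝ L, Module.finrank ℝ K = 2 ∧
      ∀ x ∈ K, ∀ y ∈ K, ⁅x, y⁆ = 0 := by
  exact exists_abelian_subalgebra_of_not_isSimple hdim fun _ => hss inferInstance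
end

section
/- On ℝ⁶ with coordinates (q₁,q₂,q₃,p₁,p₂,p₃) define the Heisenberg sub-Riemannian Hamiltonian H = ½((p₁ + q₃p₂)² + p₃²). Then the canonical Poisson brackets satisfy {H, p₁} = 0, {H, p₂} = 0 and {p₁, p₂} = 0 identically, and the differentials dH, dp₁, dp₂ are linearly independent at every point of a dense open subset of ℝ⁶. Hence H, p₁, p₂ form a complete involutive set of first integrals for the Heisenberg sub-Riemannian geodesic flow. -/
/-- The differential of the Heisenberg sub-Riemannian Hamiltonian. -/
lemma fderiv_heisenberg_hamiltonian_apply (x v : Fin 6 → ℝ) :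
    fderiv ℝ (fun x : Fin 6 → ℝ => (1/2) * ((x 3 + x 2 * x 4)^2 + (x 5)^2)) x v =
      (x 3 + x 2 * x 4) * (v 3 + x 2 * v 4 + x 4 * v 2) + x 5 * v 5 := by
  have h (i : Fin 6) : HasFDerivAt (fun y : Fin 6 → ℝ => y i)
      (ContinuousLinearMap.proj (R := ℝ) (φ := fun _ : Fin 6 => ℝ) i) x := hasFDerivAt_apply i x
  have hd := ((((h 3).add ((h 2).mul (h 4))).pow 2).add ((h 5).pow 2)).const_mul (1/2)
  refine (DFunLike.congr_fun hd.fderiv v).trans ?_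
  simp
  ring

/-- The differential of a coordinate function. -/
lemma fderiv_coordinate_apply {ι : Type*} [Fintype ι] (i : ι) (x v : ι → ℝ) :
    fderiv ℝ (fun x : ι → ℝ => x i) x v = v i :=
  DFunLike.congr_fun (hasFDerivAt_apply (𝕜 := ℝ) i x).fderiv v

theorem heisenberg_subriemannian_integrable
    (H P₁ P₂ : (Fin 6 → ℝ) → ℝ)
    (hH : H = fun x => (1/2) * ((x 3 + x 2 * x 4)^2 + (x 5)^2))
    (hP₁ : P₁ = fun x => x 3)
    (hP₂ : P₂ = fun x => x 4) :
    (∀ x, poisson6 H P₁ x = 0) ∧ (∀ x, poisson6 H P₂ x = 0) ∧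
    (∀ x, poisson6 P₁ P₂ x = 0) ∧
    ∃ U : Set (Fin 6 → ℝ), IsOpen U ∧ Dense U ∧ ∀ x ∈ U,
      LinearIndependent ℝ ![fderiv ℝ H x, fderiv ℝ P₁ x, fderiv ℝ P₂ x] := by
  subst hH hP₁ hP₂
  refine ⟨fun x => ?_, fun x => ?_, fun x => ?_, {x | x 5 ≠ 0}, ?_, ?_, fun x hx => ?_⟩
  · simp only [poisson6, pderiv6, Fin.sum_univ_three, fderiv_heisenberg_hamiltonian_apply,
      fderiv_coordinate_apply]
    simp
  · simp only [poisson6, pderiv6, Fin.sum_univ_three, fderiv_heisenberg_hamiltonian_apply,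
      fderiv_coordinate_apply]
    simp
  · simp only [poisson6, pderiv6, Fin.sum_univ_three, fderiv_coordinate_apply]
    simp
  · exact isOpen_ne_fun (continuous_apply 5) continuous_const
  · exact (dense_compl_singleton (0 : ℝ)).preimage (isOpenMap_eval 5)
  · rw [Fintype.linearIndependent_iff]
    intro g hg
    have hv (v : Fin 6 → ℝ) :
        g 0 * ((x 3 + x 2 * x 4) * (v 3 + x 2 * v 4 + x 4 * v 2) + x 5 * v 5) +
          g 1 * v 3 + g 2 * v 4 = 0 := by
      simpa [Fin.sum_univ_three, -one_div, fderiv_heisenberg_hamiltonian_apply,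
        fderiv_coordinate_apply] using DFunLike.congr_fun hg v
    have h0 : g 0 = 0 := by
      simpa [show x 5 ≠ 0 from hx] using hv (Pi.single 5 1)
    have h1 : g 1 = 0 := by simpa [h0] using hv (Pi.single 3 1)
    have h2 : g 2 = 0 := by simpa [h0] using hv (Pi.single 4 1)
    intro i
    fin_cases i
    exacts [h0, h1, h2]
end

section
/- On ℝ⁶ with coordinates (q₁,q₂,q₃,p₁,p₂,p₃) define H = ½(p₁² + (cos(q₁)p₂ − sin(q₁)p₃)²). Then the canonical Poisson brackets satisfy {H, p₂} = 0, {H, p₃} = 0 and {p₂, p₃} = 0 identically, and the differentials dH, dp₂, dp₃ are linearly independent at every point of a dense open subset of ℝ⁶. Hence H, p₂, p₃ form a complete involutive set of first integrals. -/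
/-- The differential of the sub-Riemannian Hamiltonian on the 3-torus. -/
theorem hasFDerivAt_torusHamiltonian (x : Fin 6 → ℝ) :
    HasFDerivAt (fun x : Fin 6 → ℝ =>
        (1/2) * ((x 3)^2 + (Real.cos (x 0) * x 4 - Real.sin (x 0) * x 5)^2))
      (x 3 • ContinuousLinearMap.proj (R := ℝ) (φ := fun _ : Fin 6 => ℝ) 3 +
        (Real.cos (x 0) * x 4 - Real.sin (x 0) * x 5) •
          (Real.cos (x 0) • ContinuousLinearMap.proj 4 - Real.sin (x 0) • ContinuousLinearMap.proj 5
            - (Real.sin (x 0) * x 4 + Real.cos (x 0) * x 5) • ContinuousLinearMap.proj 0)) x := by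
  have h (i : Fin 6) : HasFDerivAt (fun y : Fin 6 → ℝ => y i)
      (ContinuousLinearMap.proj (R := ℝ) (φ := fun _ : Fin 6 => ℝ) i) x := hasFDerivAt_apply i x
  refine ((((h 3).pow 2).add
    ((((h 0).cos.mul (h 4)).sub ((h 0).sin.mul (h 5))).pow 2)).const_mul (1/2 : ℝ)).congr_fderiv ?_
  ext v
  simp
  ring

theorem torus_subriemannian_integrable
    (H P₂ P₃ : (Fin 6 → ℝ) → ℝ)
    (hH : H = fun x =>
      (1/2) * ((x 3)^2 + (Real.cos (x 0) * x 4 - Real.sin (x 0) * x 5)^2))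
    (hP₂ : P₂ = fun x => x 4)
    (hP₃ : P₃ = fun x => x 5) :
    (∀ x, poisson6 H P₂ x = 0) ∧ (∀ x, poisson6 H P₃ x = 0) ∧
    (∀ x, poisson6 P₂ P₃ x = 0) ∧
    ∃ U : Set (Fin 6 → ℝ), IsOpen U ∧ Dense U ∧ ∀ x ∈ U,
      LinearIndependent ℝ ![fderiv ℝ H x, fderiv ℝ P₂ x, fderiv ℝ P₃ x] := by
  subst hH hP₂ hP₃
  have hd (i : Fin 6) (x : Fin 6 → ℝ) : fderiv ℝ (fun y : Fin 6 → ℝ => y i) x =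
      ContinuousLinearMap.proj i := (hasFDerivAt_apply i x).fderiv
  refine ⟨fun x => ?_, fun x => ?_, fun x => ?_, {x | x 3 ≠ 0}, ?_, ?_, fun x hx => ?_⟩
  · simp only [poisson6, pderiv6, hd, (hasFDerivAt_torusHamiltonian x).fderiv]
    simp [Fin.sum_univ_three, Pi.single_apply]
  · simp only [poisson6, pderiv6, hd, (hasFDerivAt_torusHamiltonian x).fderiv]
    simp [Fin.sum_univ_three, Pi.single_apply]
  · simp [poisson6, pderiv6, hd, Fin.sum_univ_three, Pi.single_apply]
  · exact isOpen_ne_fun (continuous_apply 3) continuous_const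
  · exact (dense_compl_singleton (0 : ℝ)).preimage (isOpenMap_eval 3)
  · rw [Fintype.linearIndependent_iff]
    intro g hg
    simp only [Fin.sum_univ_three, hd, (hasFDerivAt_torusHamiltonian x).fderiv] at hg
    have h0 : g 0 = 0 := by
      simpa [Pi.single_apply, show x 3 ≠ 0 from hx] using DFunLike.congr_fun hg (Pi.single 3 1)
    have h1 : g 1 = 0 := by
      simpa [Pi.single_apply, h0] using DFunLike.congr_fun hg (Pi.single 4 1)
    have h2 : g 2 = 0 := by
      simpa [Pi.single_apply, h0] using DFunLike.congr_fun hg (Pi.single 5 1)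
    intro i
    fin_cases i <;> assumption
end

section
/- Let T² = (ℝ/ℤ) × (ℝ/ℤ) and define the continuous maps F_B(x,y) = (x+y, y), F_{Bᵗ}(x,y) = (x, x+y), and F_A(x,y) = (2·x+y, x+y) on T². Then F_A = F_B ∘ F_{Bᵗ}, the topological entropies satisfy h_top(F_B) = 0 and h_top(F_{Bᵗ}) = 0, yet h_top(F_A) = log((3+√5)/2) > 0. In particular the inequality h_top(f∘g) ≤ h_top(f) + h_top(g) fails for these non-commuting maps. -/
open Dynamics

open Function goldenRatio

/-- A self-map of the plane whose first `n` iterates expand the first coordinate by at most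
`C * r ^ n` and do not expand the second one has entropy at most `log r` on squares. -/
lemma coverEntropy_square_le_log {S : ℝ × ℝ → ℝ × ℝ} {r C : ℝ} (hr : 1 ≤ r) (hC : 0 ≤ C)
    (hS : ∀ n, ∀ k < n, ∀ p q : ℝ × ℝ,
      dist (S^[k] p) (S^[k] q) ≤ C * r ^ n * |p.1 - q.1| + |p.2 - q.2|) (M : ℕ) :
    coverEntropy S {p : ℝ × ℝ | |p.1| ≤ M ∧ |p.2| ≤ M} ≤ (Real.log r : EReal) := by
  have hr0 : 0 < r := by linarith
  rw [coverEntropy_eq_iSup_basis Metric.uniformity_basis_dist]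
  refine iSup₂_le fun ε hε ↦ ?_
  rw [← ENNReal.log_ofReal_of_pos hr0, ← ExpGrowth.expGrowthSup_pow, coverEntropyEntourage]
  set L : ℕ := ⌈3 / ε⌉₊ + 1 with hL
  set K : ℝ := (2 * M + 1) * ((3 / ε) * C + 2) * ((2 * M + 1) * L) with hK
  refine ExpGrowth.expGrowthSup_le_of_eventually_le (b := ENNReal.ofReal K) ENNReal.ofReal_ne_top
    (Filter.Eventually.of_forall fun n ↦ ?_)
  set m : ℕ := ⌈3 / ε * (C * r ^ n)⌉₊ + 1 with hm
  have hrn : 1 ≤ r ^ n := one_le_pow₀ hr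
  have hm0 : (0 : ℝ) < m := by positivity
  have hL0 : (0 : ℝ) < L := by positivity
  have hm1 : 3 / ε * (C * r ^ n) ≤ m := by
    rw [hm]; push_cast; linarith [Nat.le_ceil (3 / ε * (C * r ^ n))]
  have hL1 : 3 / ε ≤ L := by
    rw [hL]; push_cast; linarith [Nat.le_ceil (3 / ε)]
  have hm2 : (m : ℝ) ≤ ((3 / ε) * C + 2) * r ^ n := by
    have := Nat.ceil_lt_add_one (a := 3 / ε * (C * r ^ n)) (by positivity)
    rw [hm]; push_cast; nlinarith
  let grid : Finset (ℝ × ℝ) :=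
    ((Finset.Icc (-(M * m : ℤ)) (M * m)) ×ˢ (Finset.Icc (-(M * L : ℤ)) (M * L))).image
      fun i ↦ ((i.1 : ℝ) / m, (i.2 : ℝ) / L)
  have floor_mem : ∀ (a : ℕ) (x : ℝ), |x| ≤ M →
      ⌊x * a⌋ ∈ Finset.Icc (-(M * a : ℤ)) (M * a) := by
    intro a x hx
    have ha : (0 : ℝ) ≤ a := a.cast_nonneg
    obtain ⟨h1, h2⟩ := abs_le.1 hx
    rw [Finset.mem_Icc]
    constructor
    · rw [Int.le_floor]; push_cast; nlinarith
    · have h3 : ((⌊x * a⌋ : ℤ) : ℝ) ≤ ((M * a : ℤ) : ℝ) := by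
        push_cast; nlinarith [Int.floor_le (x * a)]
      exact_mod_cast h3
  have floor_close : ∀ (a : ℕ) (x : ℝ), (0 : ℝ) < a → |x - ⌊x * a⌋ / a| ≤ 1 / a := by
    intro a x ha
    have h1 := Int.floor_le (x * a)
    have h2 := Int.lt_floor_add_one (x * a)
    have h3 : x - ⌊x * a⌋ / a = (x * a - ⌊x * a⌋) / a := by field_simp
    rw [h3, abs_of_nonneg (div_nonneg (by linarith) ha.le)]
    gcongr
    linarith
  have cover : IsDynCoverOf S {p : ℝ × ℝ | |p.1| ≤ M ∧ |p.2| ≤ M}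
      {p | dist p.1 p.2 < ε} n (grid : Set (ℝ × ℝ)) := by
    rintro p ⟨hp1, hp2⟩
    refine ⟨(⌊p.1 * m⌋ / m, ⌊p.2 * L⌋ / L), ?_, ?_⟩
    · exact Finset.mem_coe.2 (Finset.mem_image.2 ⟨(⌊p.1 * m⌋, ⌊p.2 * L⌋),
        Finset.mem_product.2 ⟨floor_mem m p.1 hp1, floor_mem L p.2 hp2⟩, rfl⟩)
    · refine mem_dynEntourage.2 fun k hk ↦ ?_
      refine (hS n k hk _ _).trans_lt ?_
      have h1 : C * r ^ n * |p.1 - ⌊p.1 * m⌋ / m| ≤ ε / 3 := by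
        calc C * r ^ n * |p.1 - ⌊p.1 * m⌋ / m| ≤ C * r ^ n * (1 / m) := by
              gcongr; exact floor_close m p.1 hm0
          _ ≤ ε / 3 := by
              rw [mul_one_div, div_le_iff₀ hm0]
              calc C * r ^ n = ε / 3 * (3 / ε * (C * r ^ n)) := by field_simp
                _ ≤ _ := by gcongr
      have h2 : |p.2 - ⌊p.2 * L⌋ / L| ≤ ε / 3 := by
        refine (floor_close L p.2 hL0).trans ?_
        rw [div_le_iff₀ hL0]
        calc 1 = ε / 3 * (3 / ε) := by field_simp
          _ ≤ _ := by gcongr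
      dsimp only
      linarith
  have card_le : (grid.card : ℝ) ≤ K * r ^ n := by
    have h1 : grid.card ≤ (2 * M * m + 1) * (2 * M * L + 1) := by
      refine Finset.card_image_le.trans_eq ?_
      rw [Finset.card_product, Int.card_Icc, Int.card_Icc]
      congr 1
      · have : (M * m + 1 - -(M * m : ℤ)) = ((2 * M * m + 1 : ℕ) : ℤ) := by push_cast; ring
        rw [this, Int.toNat_natCast]
      · have : (M * L + 1 - -(M * L : ℤ)) = ((2 * M * L + 1 : ℕ) : ℤ) := by push_cast; ring
        rw [this, Int.toNat_natCast]
    have hm3 : (1 : ℝ) ≤ m := by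
      rw [hm]; push_cast; linarith [(⌈3 / ε * (C * r ^ n)⌉₊).cast_nonneg (α := ℝ)]
    have hL3 : (1 : ℝ) ≤ L := by rw [hL]; push_cast; linarith [(⌈3 / ε⌉₊).cast_nonneg (α := ℝ)]
    calc (grid.card : ℝ) ≤ (2 * M * m + 1) * (2 * M * L + 1) := by exact_mod_cast h1
      _ ≤ ((2 * M + 1) * m) * ((2 * M + 1) * L) := by gcongr <;> linarith
      _ ≤ ((2 * M + 1) * (((3 / ε) * C + 2) * r ^ n)) * ((2 * M + 1) * L) := by gcongr
      _ = K * r ^ n := by rw [hK]; ring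
  calc ((coverMincard S {p : ℝ × ℝ | |p.1| ≤ M ∧ |p.2| ≤ M} {p | dist p.1 p.2 < ε} n : ℕ∞) :
        ENNReal) ≤ ((grid.card : ℕ∞) : ENNReal) :=
        ENat.toENNReal_mono cover.coverMincard_le_card
    _ = ENNReal.ofReal grid.card := by simp
    _ ≤ ENNReal.ofReal (K * r ^ n) := ENNReal.ofReal_le_ofReal card_le
    _ = ENNReal.ofReal K * ENNReal.ofReal r ^ n := by
        rw [ENNReal.ofReal_mul (by positivity), ENNReal.ofReal_pow hr0.le]

/-- A linear shear of the plane has no positive entropy on squares. -/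
lemma coverEntropy_shear_square_le_zero (M : ℕ) :
    coverEntropy (fun p : ℝ × ℝ ↦ (p.1, p.1 + p.2)) {p : ℝ × ℝ | |p.1| ≤ M ∧ |p.2| ≤ M} ≤ 0 := by
  have iter : ∀ (k : ℕ) (p : ℝ × ℝ),
      (fun p : ℝ × ℝ ↦ (p.1, p.1 + p.2))^[k] p = (p.1, k * p.1 + p.2) := by
    intro k p
    induction k with
    | zero => simp
    | succ k ih =>
      rw [iterate_succ_apply', ih]
      ext
      · rfl
      · push_cast; ring
  have key : ∀ δ : ℝ, 0 < δ →
      coverEntropy (fun p : ℝ × ℝ ↦ (p.1, p.1 + p.2)) {p : ℝ × ℝ | |p.1| ≤ M ∧ |p.2| ≤ M}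
        ≤ ((δ : ℝ) : EReal) := by
    intro δ hδ
    have h1 : 1 < Real.exp δ := Real.one_lt_exp_iff.2 hδ
    set η := Real.exp δ - 1 with hη
    have hη0 : 0 < η := by linarith
    have := coverEntropy_square_le_log (S := fun p : ℝ × ℝ ↦ (p.1, p.1 + p.2)) (r := Real.exp δ)
      (C := 1 + 1 / η) h1.le (by positivity) ?_ M
    · rwa [Real.log_exp] at this
    intro n k hk p q
    have hb := one_add_mul_le_pow (a := η) (by linarith) n
    rw [show 1 + η = Real.exp δ by rw [hη]; ring] at hb
    have hkn : (k : ℝ) ≤ n := by exact_mod_cast hk.le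
    have hn : (1 : ℝ) + n ≤ (1 + 1 / η) * Real.exp δ ^ n := by
      have h2 : (n : ℝ) ≤ 1 / η * Real.exp δ ^ n := by
        rw [one_div_mul_eq_div, le_div_iff₀ hη0]; linarith
      have h3 : 1 ≤ Real.exp δ ^ n := one_le_pow₀ h1.le
      linarith
    have habs := abs_nonneg (p.1 - q.1)
    have hfine : (1 + (n : ℝ)) * |p.1 - q.1| ≤
        (1 + 1 / η) * Real.exp δ ^ n * |p.1 - q.1| := by gcongr
    rw [iter, iter, Prod.dist_eq, Real.dist_eq, Real.dist_eq]
    refine max_le ?_ ?_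
    · have : (0 : ℝ) ≤ n * |p.1 - q.1| := by positivity
      linarith [abs_nonneg (p.2 - q.2)]
    · dsimp only
      have h4 : k * p.1 + p.2 - (k * q.1 + q.2) = k * (p.1 - q.1) + (p.2 - q.2) := by ring
      rw [h4]
      refine (abs_add_le _ _).trans ?_
      rw [abs_mul, Nat.abs_cast]
      have : (k : ℝ) * |p.1 - q.1| ≤ n * |p.1 - q.1| := by gcongr
      linarith
  refine EReal.le_of_forall_lt_iff_le.1 fun z hz ↦ key z ?_
  exact_mod_cast hz

/-- A self-map of the torus semiconjugate to the planar shear by a uniformly continuous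
map sending some square onto the torus has zero entropy. -/
lemma coverEntropy_eq_zero_of_semiconj_shear
    {T : UnitAddCircle × UnitAddCircle → UnitAddCircle × UnitAddCircle}
    {f : ℝ × ℝ → UnitAddCircle × UnitAddCircle}
    (h : Semiconj f (fun p : ℝ × ℝ ↦ (p.1, p.1 + p.2)) T) (hf : UniformContinuous f)
    {M : ℕ} (hs : f '' {p : ℝ × ℝ | |p.1| ≤ M ∧ |p.2| ≤ M} = Set.univ) :
    coverEntropy T Set.univ = 0 := by
  refine le_antisymm ?_ (coverEntropy_nonneg T Set.univ_nonempty)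
  rw [← hs]
  exact (coverEntropy_image_le_of_uniformContinuous h hf _).trans
    (coverEntropy_shear_square_le_zero M)

lemma uniformContinuous_coe_unitAddCircle :
    UniformContinuous (fun x : ℝ ↦ (x : UnitAddCircle)) :=
  uniformContinuous_of_continuousAt_zero (QuotientAddGroup.mk' _)
    (AddCircle.continuous_mk' (1 : ℝ)).continuousAt

lemma exists_coe_unitAddCircle_eq (a : UnitAddCircle) :
    ∃ x : ℝ, 0 ≤ x ∧ x ≤ 1 ∧ (x : UnitAddCircle) = a := by
  have := AddCircle.coe_image_Icc_eq (1 : ℝ) 0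
  obtain ⟨x, hx, rfl⟩ := this.symm ▸ Set.mem_univ a
  exact ⟨x, hx.1, by simpa using hx.2, rfl⟩

/-- The plane in the coordinates given by the eigenvectors `(φ, 1)` and `(ψ, 1)` of
`[[2, 1], [1, 1]]`, projected to the torus. -/
noncomputable def eigenProj (p : ℝ × ℝ) : UnitAddCircle × UnitAddCircle :=
  (((φ * p.1 + ψ * p.2 : ℝ) : UnitAddCircle), ((p.1 + p.2 : ℝ) : UnitAddCircle))

lemma uniformContinuous_eigenProj : UniformContinuous eigenProj := by
  refine UniformContinuous.prodMk (uniformContinuous_coe_unitAddCircle.comp ?_)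
    (uniformContinuous_coe_unitAddCircle.comp ?_)
  · exact (uniformContinuous_fst.const_mul' φ).add (uniformContinuous_snd.const_mul' ψ)
  · exact uniformContinuous_fst.add uniformContinuous_snd

lemma semiconj_eigenProj :
    Semiconj eigenProj (fun p ↦ (φ ^ 2 * p.1, ψ ^ 2 * p.2))
      (fun p ↦ (p.1 + p.1 + p.2, p.1 + p.2)) := by
  intro p
  simp only [eigenProj, ← AddCircle.coe_add, Real.goldenRatio_sq, Real.goldenConj_sq]
  have h1 := Real.goldenRatio_sq
  have h2 := Real.goldenConj_sq
  congr 2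
  · linear_combination p.1 * h1 + p.2 * h2
  · ring

lemma image_eigenProj :
    eigenProj '' {p : ℝ × ℝ | |p.1| ≤ (2 : ℕ) ∧ |p.2| ≤ (2 : ℕ)} = Set.univ := by
  refine Set.eq_univ_of_forall fun ⟨a, b⟩ ↦ ?_
  obtain ⟨x, hx0, hx1, rfl⟩ := exists_coe_unitAddCircle_eq a
  obtain ⟨y, hy0, hy1, rfl⟩ := exists_coe_unitAddCircle_eq b
  have hφ1 := Real.one_lt_goldenRatio
  have hφ2 := Real.goldenRatio_lt_two
  have hψ1 := Real.neg_one_lt_goldenConj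
  have hψ2 := Real.goldenConj_neg
  have hd : (1 : ℝ) ≤ φ - ψ := by linarith
  have hd0 : φ - ψ ≠ 0 := by linarith
  refine ⟨((x - ψ * y) / (φ - ψ), (φ * y - x) / (φ - ψ)), ⟨?_, ?_⟩, ?_⟩
  · rw [abs_div, abs_of_pos (by linarith : 0 < φ - ψ), div_le_iff₀ (by linarith), abs_le]
    push_cast
    constructor <;> nlinarith
  · rw [abs_div, abs_of_pos (by linarith : 0 < φ - ψ), div_le_iff₀ (by linarith), abs_le]
    push_cast
    constructor <;> nlinarith
  · simp only [eigenProj]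
    congr 2
    · field_simp; ring
    · field_simp; ring

/-- The cat map has entropy at most the logarithm of its large eigenvalue. -/
lemma coverEntropy_catMap_le :
    coverEntropy (fun p : UnitAddCircle × UnitAddCircle ↦ (p.1 + p.1 + p.2, p.1 + p.2)) Set.univ ≤
      (Real.log (φ ^ 2) : EReal) := by
  have hφ : (1 : ℝ) ≤ φ ^ 2 := one_le_pow₀ Real.one_lt_goldenRatio.le
  have hψ : ψ ^ 2 ≤ 1 := by
    nlinarith [Real.neg_one_lt_goldenConj, Real.goldenConj_neg]
  rw [← image_eigenProj]
  refine (coverEntropy_image_le_of_uniformContinuous semiconj_eigenProj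
    uniformContinuous_eigenProj _).trans ?_
  refine coverEntropy_square_le_log (C := 1) hφ zero_le_one (fun n k hk p q ↦ ?_) 2
  have iter : ∀ p : ℝ × ℝ, (fun p : ℝ × ℝ ↦ (φ ^ 2 * p.1, ψ ^ 2 * p.2))^[k] p =
      ((φ ^ 2) ^ k * p.1, (ψ ^ 2) ^ k * p.2) := by
    intro p
    change (Prod.map (φ ^ 2 * ·) (ψ ^ 2 * ·))^[k] p = _
    rw [Prod.map_iterate, mul_left_iterate, mul_left_iterate]
    rfl
  rw [iter, iter, Prod.dist_eq, Real.dist_eq, Real.dist_eq, one_mul]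
  dsimp only
  rw [← mul_sub, ← mul_sub, abs_mul, abs_mul, abs_of_nonneg (by positivity : 0 ≤ (φ ^ 2) ^ k),
    abs_of_nonneg (by positivity : 0 ≤ (ψ ^ 2) ^ k)]
  refine max_le ?_ ?_
  · have : (φ ^ 2) ^ k * |p.1 - q.1| ≤ (φ ^ 2) ^ n * |p.1 - q.1| := by
      gcongr
    linarith [abs_nonneg (p.2 - q.2)]
  · have : (ψ ^ 2) ^ k * |p.2 - q.2| ≤ |p.2 - q.2| :=
      mul_le_of_le_one_left (abs_nonneg _) (pow_le_one₀ (by positivity) hψ)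
    have : 0 ≤ (φ ^ 2) ^ n * |p.1 - q.1| := by positivity
    linarith

/-- Orbits along the unstable direction that start close and stay close are exponentially close at
the start. -/
lemma pow_mul_abs_sub_lt_of_dist_lt {u v : ℝ} {n : ℕ} (huv : |u - v| ≤ 1 / 2)
    (h : ∀ k < n, dist ((((φ ^ 2) ^ k * u : ℝ)) : UnitAddCircle)
      (((φ ^ 2) ^ k * v : ℝ) : UnitAddCircle) < 1 / 6) :
    ∀ k < n, (φ ^ 2) ^ k * |u - v| < 1 / 6 := by
  have step : ∀ k < n, (φ ^ 2) ^ k * |u - v| ≤ 1 / 2 → (φ ^ 2) ^ k * |u - v| < 1 / 6 := by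
    intro k hk hle
    have h1 := h k hk
    have habs : (φ ^ 2) ^ k * |u - v| = |(φ ^ 2) ^ k * u - (φ ^ 2) ^ k * v| := by
      rw [← mul_sub, abs_mul, abs_of_nonneg (by positivity : 0 ≤ (φ ^ 2) ^ k)]
    rw [dist_eq_norm, ← AddCircle.coe_sub, (AddCircle.norm_coe_eq_abs_iff 1 one_ne_zero).2
      (by rw [← habs]; simpa using hle)] at h1
    rwa [habs]
  intro k
  induction k with
  | zero => exact fun hk ↦ step 0 hk (by simpa using huv)
  | succ k ih =>
    intro hk
    refine step _ hk ?_
    have h1 := ih (by omega)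
    have h2 : φ ^ 2 < 3 := by rw [Real.goldenRatio_sq]; linarith [Real.goldenRatio_lt_two]
    have h3 : 0 ≤ (φ ^ 2) ^ k * |u - v| := by positivity
    rw [pow_succ]
    nlinarith

/-- The cat map has entropy at least the logarithm of its large eigenvalue: equally spaced points
on an unstable segment are separated. -/
lemma le_coverEntropy_catMap :
    (Real.log (φ ^ 2) : EReal) ≤
      coverEntropy (fun p : UnitAddCircle × UnitAddCircle ↦ (p.1 + p.1 + p.2, p.1 + p.2))
        Set.univ := by
  have hφ : (1 : ℝ) ≤ φ ^ 2 := one_le_pow₀ Real.one_lt_goldenRatio.le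
  have hφ3 : φ ^ 2 < 3 := by rw [Real.goldenRatio_sq]; linarith [Real.goldenRatio_lt_two]
  have hφ0 : (0 : ℝ) < φ ^ 2 := by linarith
  refine le_trans ?_ (netEntropyEntourage_le_coverEntropy _ _
    (Metric.dist_mem_uniformity (by norm_num : (0 : ℝ) < 1 / 12)))
  rw [← ENNReal.log_ofReal_of_pos hφ0, ← ExpGrowth.expGrowthSup_pow, netEntropyEntourage]
  refine ExpGrowth.expGrowthSup_of_eventually_ge (b := ENNReal.ofReal (1 / 2)) (by simp)
    (Filter.eventually_atTop.2 ⟨1, fun n hn ↦ ?_⟩)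
  set T := fun p : UnitAddCircle × UnitAddCircle ↦ (p.1 + p.1 + p.2, p.1 + p.2) with hT
  set R : ℝ := (φ ^ 2) ^ n with hR
  have hR0 : 0 < R := by positivity
  let pt : ℕ → UnitAddCircle × UnitAddCircle := fun i ↦ eigenProj (i / R, 0)
  have iter : ∀ (k : ℕ) (u : ℝ), (T^[k] (eigenProj (u, 0))).2 =
      (((φ ^ 2) ^ k * u : ℝ) : UnitAddCircle) := by
    intro k u
    rw [← (semiconj_eigenProj.iterate_right k).eq]
    change (eigenProj ((Prod.map (φ ^ 2 * ·) (ψ ^ 2 * ·))^[k] (u, 0))).2 = _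
    rw [Prod.map_iterate, mul_left_iterate, mul_left_iterate]
    simp [eigenProj]
  set N : ℕ := ⌊R / 2⌋₊ + 1 with hN
  have sep : ∀ i ∈ Finset.range N, ∀ j ∈ Finset.range N,
      ¬ Disjoint (UniformSpace.ball (pt i) (dynEntourage T {p | dist p.1 p.2 < 1 / 12} n))
        (UniformSpace.ball (pt j) (dynEntourage T {p | dist p.1 p.2 < 1 / 12} n)) → i = j := by
    intro i hi j hj hij
    obtain ⟨z, hzi, hzj⟩ := Set.not_disjoint_iff.1 hij
    rw [mem_ball_dynEntourage] at hzi hzj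
    have le_half : ∀ i ∈ Finset.range N, (i : ℝ) / R ≤ 1 / 2 := by
      intro i hi
      have h1 : i ≤ ⌊R / 2⌋₊ := by rw [Finset.mem_range] at hi; omega
      rw [Nat.le_floor_iff (by positivity)] at h1
      rw [div_le_iff₀ hR0]; linarith
    have hnear : |(i : ℝ) / R - j / R| ≤ 1 / 2 := by
      have h1 : (0 : ℝ) ≤ i / R := by positivity
      have h2 : (0 : ℝ) ≤ j / R := by positivity
      exact abs_le.2 ⟨by linarith [le_half j hj], by linarith [le_half i hi]⟩
    have hlt := pow_mul_abs_sub_lt_of_dist_lt (n := n) hnear (fun k hk ↦ ?_) (n - 1) (by omega)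
    · by_contra hne
      have hone : (1 : ℝ) ≤ |(i : ℝ) - j| := by
        have : (1 : ℤ) ≤ |(i : ℤ) - j| := Int.one_le_abs (by omega)
        exact_mod_cast this
      have hRn : R = (φ ^ 2) ^ (n - 1) * φ ^ 2 := by
        rw [hR, ← pow_succ, Nat.sub_add_cancel hn]
      rw [← sub_div, abs_div, abs_of_pos hR0, mul_div_assoc', div_lt_iff₀ hR0, hRn] at hlt
      have : (0 : ℝ) < (φ ^ 2) ^ (n - 1) := by positivity
      nlinarith
    · rw [← iter, ← iter]
      have h1 : dist (T^[k] (pt i)) (T^[k] z) < 1 / 12 := hzi k hk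
      have h2 : dist (T^[k] (pt j)) (T^[k] z) < 1 / 12 := hzj k hk
      refine (le_max_right _ _).trans_lt
        ((dist_triangle_right (T^[k] (pt i)) (T^[k] (pt j)) (T^[k] z)).trans_lt ?_)
      linarith
  have refl_mem : ∀ x, x ∈ UniformSpace.ball x (dynEntourage T {p | dist p.1 p.2 < 1 / 12} n) := by
    intro x
    refine mem_ball_dynEntourage.2 fun k _ ↦ ?_
    simp [UniformSpace.ball]
  have inj : Set.InjOn pt (Finset.range N) := by
    intro i hi j hj hij
    exact sep i hi j hj (Set.not_disjoint_iff.2 ⟨pt i, refl_mem _, hij ▸ refl_mem _⟩)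
  have net : IsDynNetIn T Set.univ {p | dist p.1 p.2 < 1 / 12} n
      (((Finset.range N).image pt : Finset _) : Set (UnitAddCircle × UnitAddCircle)) := by
    refine ⟨Set.subset_univ _, ?_⟩
    rw [Finset.coe_image]
    rintro _ ⟨i, hi, rfl⟩ _ ⟨j, hj, rfl⟩ hne
    by_contra hdisj
    exact hne (congrArg pt (sep i hi j hj hdisj))
  have hcard := net.card_le_netMaxcard
  rw [Finset.card_image_of_injOn inj, Finset.card_range] at hcard
  calc ENNReal.ofReal (1 / 2) * ENNReal.ofReal (φ ^ 2) ^ n = ENNReal.ofReal (1 / 2 * R) := by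
        rw [ENNReal.ofReal_mul (by norm_num), ENNReal.ofReal_pow hφ0.le]
    _ ≤ ENNReal.ofReal N := by
        refine ENNReal.ofReal_le_ofReal ?_
        rw [hN]; push_cast; linarith [Nat.lt_floor_add_one (R / 2)]
    _ = ((N : ℕ∞) : ENNReal) := by simp
    _ ≤ _ := ENat.toENNReal_mono hcard

theorem entropy_subadditivity_fails_without_commutativity
    (FB FBt FA : (AddCircle (1:ℝ) × AddCircle (1:ℝ)) → (AddCircle (1:ℝ) × AddCircle (1:ℝ)))
    (hFB : FB = fun p => (p.1 + p.2, p.2))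
    (hFBt : FBt = fun p => (p.1, p.1 + p.2))
    (hFA : FA = fun p => (p.1 + p.1 + p.2, p.1 + p.2)) :
    FA = FB ∘ FBt ∧
    coverEntropy FB Set.univ = 0 ∧
    coverEntropy FBt Set.univ = 0 ∧
    coverEntropy FA Set.univ = (Real.log ((3 + Real.sqrt 5) / 2) : EReal) ∧
    (0 : EReal) < coverEntropy FA Set.univ ∧
    ¬ (coverEntropy FA Set.univ ≤ coverEntropy FB Set.univ + coverEntropy FBt Set.univ) := by
  have hB : coverEntropy FB Set.univ = 0 := by
    refine coverEntropy_eq_zero_of_semiconj_shear (M := 1)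
      (f := fun p ↦ ((p.2 : UnitAddCircle), (p.1 : UnitAddCircle))) ?_
      ((uniformContinuous_coe_unitAddCircle.comp uniformContinuous_snd).prodMk
        (uniformContinuous_coe_unitAddCircle.comp uniformContinuous_fst)) ?_
    · intro p
      simp [hFB, add_comm]
    · refine Set.eq_univ_of_forall fun ⟨a, b⟩ ↦ ?_
      obtain ⟨x, hx0, hx1, rfl⟩ := exists_coe_unitAddCircle_eq a
      obtain ⟨y, hy0, hy1, rfl⟩ := exists_coe_unitAddCircle_eq b
      exact ⟨(y, x), by simp [abs_of_nonneg, *], rfl⟩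
  have hBt : coverEntropy FBt Set.univ = 0 := by
    refine coverEntropy_eq_zero_of_semiconj_shear (M := 1)
      (f := fun p ↦ ((p.1 : UnitAddCircle), (p.2 : UnitAddCircle))) ?_
      ((uniformContinuous_coe_unitAddCircle.comp uniformContinuous_fst).prodMk
        (uniformContinuous_coe_unitAddCircle.comp uniformContinuous_snd)) ?_
    · intro p
      simp [hFBt]
    · refine Set.eq_univ_of_forall fun ⟨a, b⟩ ↦ ?_
      obtain ⟨x, hx0, hx1, rfl⟩ := exists_coe_unitAddCircle_eq a
      obtain ⟨y, hy0, hy1, rfl⟩ := exists_coe_unitAddCircle_eq b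
      exact ⟨(x, y), by simp [abs_of_nonneg, *], rfl⟩
  have hval : (3 + Real.sqrt 5) / 2 = φ ^ 2 := by
    rw [Real.goldenRatio_sq, Real.goldenRatio]; ring
  have hA : coverEntropy FA Set.univ = (Real.log ((3 + Real.sqrt 5) / 2) : EReal) := by
    rw [hval, hFA]
    exact le_antisymm coverEntropy_catMap_le le_coverEntropy_catMap
  have hpos : (0 : EReal) < coverEntropy FA Set.univ := by
    rw [hA, hval]
    exact_mod_cast Real.log_pos (one_lt_pow₀ Real.one_lt_goldenRatio two_ne_zero)
  refine ⟨?_, hB, hBt, hA, hpos, ?_⟩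
  · funext p
    simp [hFA, hFB, hFBt, add_assoc]
  · rw [hB, hBt, add_zero]
    exact not_le.2 hpos
end

section
/- Let A ∈ SL₂(ℤ) be such that either |trace A| > 2, or trace A = ±2 and A ≠ ±Id (i.e. A has real eigenvalues and is not ±Id, or A is a Jordan box). Let G = ℤ² ⋊_A ℤ be the semidirect product in which the generator of ℤ acts on ℤ² by the automorphism given by A. Then G is not almost commutative: G contains no abelian subgroup of finite index. -/
/-!
STATEMENT 14: Let A ∈ SL₂(ℤ) have |trace A| > 2, or trace A = ±2 with A ≠ ±Id.
Then the semidirect product G = ℤ² ⋊_A ℤ (the fundamental group of the suspension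
M_A), where the generator of ℤ acts on ℤ² by the automorphism given by A, contains
no abelian subgroup of finite index.
The automorphism of ℤ² given by A is encoded by any additive equivalence
e : ℤ × ℤ ≃+ ℤ × ℤ acting as v ↦ A·v, and the semidirect product is taken in
multiplicative notation.
-/

/-- By Cayley–Hamilton, the positive powers of a `2 × 2` integer matrix of determinant one and
`|trace| ≥ 2` are combinations `a • A - b • 1` with `|b| < |a|`. -/
theorem exists_pow_succ_eq_smul_sub_smul_one (A : Matrix (Fin 2) (Fin 2) ℤ) (hdet : A.det = 1)
    (htr : 2 ≤ |A.trace|) (k : ℕ) :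
    ∃ a b : ℤ, A ^ (k + 1) = a • A - b • (1 : Matrix (Fin 2) (Fin 2) ℤ) ∧ |b| < |a| := by
  induction k with
  | zero => exact ⟨1, 0, by simp, by simp⟩
  | succ k ih =>
    obtain ⟨a, b, hpow, hab⟩ := ih
    have hsq : A * A = A.trace • A - (1 : Matrix (Fin 2) (Fin 2) ℤ) := by
      rw [Matrix.det_fin_two] at hdet
      ext i j
      fin_cases i <;> fin_cases j <;>
        simp [Matrix.mul_apply, Fin.sum_univ_two, Matrix.trace_fin_two, -zsmul_eq_mul] <;> linarith
    refine ⟨A.trace * a - b, a, ?_, ?_⟩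
    · rw [pow_succ, hpow, sub_mul, smul_mul_assoc, smul_mul_assoc, hsq, one_mul]
      module
    · have hlower := abs_sub_abs_le_abs_sub (A.trace * a) b
      rw [abs_mul] at hlower
      nlinarith [abs_nonneg a]

/-- A `2 × 2` integer matrix of determinant one with `|trace| ≥ 2` and of finite order is `±1`. -/
theorem eq_one_or_eq_neg_one_of_pow_eq_one (A : Matrix (Fin 2) (Fin 2) ℤ) (hdet : A.det = 1)
    (htr : 2 ≤ |A.trace|) {m : ℕ} (hm : m ≠ 0) (hA : A ^ m = 1) : A = 1 ∨ A = -1 := by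
  obtain ⟨k, rfl⟩ := Nat.exists_eq_succ_of_ne_zero hm
  obtain ⟨a, b, hpow, hab⟩ := exists_pow_succ_eq_smul_sub_smul_one A hdet htr k
  have ha : a ≠ 0 := by
    rintro rfl
    exact absurd hab (by simp)
  have hlin : a • A - b • (1 : Matrix (Fin 2) (Fin 2) ℤ) = 1 := hpow.symm.trans hA
  have h00 := congrFun (congrFun hlin 0) 0
  have h01 := congrFun (congrFun hlin 0) 1
  have h10 := congrFun (congrFun hlin 1) 0
  have h11 := congrFun (congrFun hlin 1) 1
  simp only [Matrix.sub_apply, Matrix.smul_apply, smul_eq_mul, Matrix.one_apply_eq] at h00 h11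
  simp [ha, -zsmul_eq_mul, -zsmul_one] at h01 h10
  have hdiag : A 1 1 = A 0 0 := mul_left_cancel₀ ha (by linarith)
  have hunit : A 0 0 * A 0 0 = 1 := by
    rw [Matrix.det_fin_two, hdiag, h01] at hdet
    linarith
  rcases mul_self_eq_one_iff.mp hunit with h | h
  · left
    ext i j
    fin_cases i <;> fin_cases j <;> simp [h01, h10, hdiag, h]
  · right
    ext i j
    fin_cases i <;> fin_cases j <;> simp [h01, h10, hdiag, h]

/-- If an automorphism of `ℤ × ℤ` acts by the matrix `A`, its powers act by the powers of `A`. -/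
theorem toMultiplicative_pow_apply (A : Matrix (Fin 2) (Fin 2) ℤ) (e : (ℤ × ℤ) ≃+ (ℤ × ℤ))
    (he : ∀ v : ℤ × ℤ, e v = (A 0 0 * v.1 + A 0 1 * v.2, A 1 0 * v.1 + A 1 1 * v.2))
    (k : ℕ) (v : ℤ × ℤ) :
    ((AddEquiv.toMultiplicative e : MulAut (Multiplicative (ℤ × ℤ))) ^ k) (Multiplicative.ofAdd v) =
      Multiplicative.ofAdd ((A ^ k) 0 0 * v.1 + (A ^ k) 0 1 * v.2,
        (A ^ k) 1 0 * v.1 + (A ^ k) 1 1 * v.2) := by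
  induction k generalizing v with
  | zero => simp
  | succ k ih =>
    have happ : (AddEquiv.toMultiplicative e : MulAut (Multiplicative (ℤ × ℤ)))
        (Multiplicative.ofAdd v) = Multiplicative.ofAdd (e v) := rfl
    rw [pow_succ, MulAut.mul_apply, happ, ih, he, pow_succ]
    simp only [Matrix.mul_apply, Fin.sum_univ_two]
    congr 2 <;> ring

/-- If a semidirect product `N ⋊ ℤ` has an abelian subgroup of finite index, then some positive
power `φ ^ m` of the defining automorphism fixes all `m`-th powers in `N`. -/
theorem exists_pow_apply_pow_eq_of_finiteIndex_of_commute {N : Type*} [Group N] (φ : MulAut N)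
    (H : Subgroup (SemidirectProduct N (Multiplicative ℤ) (zpowersHom (MulAut N) φ)))
    (hfin : H.FiniteIndex) (hcomm : ∀ x y : H, x * y = y * x) :
    ∃ m : ℕ, m ≠ 0 ∧ ∀ n : N, (φ ^ m) (n ^ m) = n ^ m := by
  refine ⟨H.normalCore.index, Subgroup.FiniteIndex.index_ne_zero, fun n => ?_⟩
  set m := H.normalCore.index
  have hmem (g) : g ^ m ∈ H := H.normalCore_le (H.normalCore.pow_index_mem g)
  have hc := congrArg Subtype.val (hcomm
    ⟨_, hmem (SemidirectProduct.inr (Multiplicative.ofAdd 1))⟩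
    ⟨_, hmem (SemidirectProduct.inl n)⟩)
  simp only [Subgroup.coe_mul, ← map_pow] at hc
  simpa [-map_pow, ← ofAdd_nsmul] using congrArg SemidirectProduct.left hc

theorem suspension_fundamental_group_not_almost_commutative
    (A : Matrix (Fin 2) (Fin 2) ℤ) (hdet : A.det = 1)
    (hyp : 2 < |A.trace| ∨ ((A.trace = 2 ∨ A.trace = -2) ∧ A ≠ 1 ∧ A ≠ -1))
    (e : (ℤ × ℤ) ≃+ (ℤ × ℤ))
    (he : ∀ v : ℤ × ℤ, e v = (A 0 0 * v.1 + A 0 1 * v.2, A 1 0 * v.1 + A 1 1 * v.2)) :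
    ¬ ∃ H : Subgroup (SemidirectProduct (Multiplicative (ℤ × ℤ)) (Multiplicative ℤ)
        (zpowersHom (MulAut (Multiplicative (ℤ × ℤ))) (AddEquiv.toMultiplicative e))),
      H.FiniteIndex ∧ ∀ x y : H, x * y = y * x := by
  rintro ⟨H, hfin, hcomm⟩
  obtain ⟨m, hm, hfix⟩ := exists_pow_apply_pow_eq_of_finiteIndex_of_commute _ H hfin hcomm
  have hpow : A ^ m = 1 := by
    have hx := hfix (Multiplicative.ofAdd (1, 0))
    have hy := hfix (Multiplicative.ofAdd (0, 1))
    rw [← ofAdd_nsmul, toMultiplicative_pow_apply A e he, Multiplicative.ofAdd.injective.eq_iff,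
      Prod.ext_iff] at hx hy
    simp [hm] at hx hy
    ext i j
    fin_cases i <;> fin_cases j <;> simp [hx, hy]
  have htr : 2 ≤ |A.trace| := by
    rcases hyp with h | ⟨h | h, -⟩
    · exact h.le
    · simp [h]
    · simp [h]
  rcases eq_one_or_eq_neg_one_of_pow_eq_one A hdet htr hm hpow with rfl | rfl <;>
    simp at hyp
end

section
/- Let θ ≠ 0 be a real number and define vector fields on ℝ³ by ξ₁(x,y,t) = (cos(θt), −sin(θt), 0) and ξ₂(x,y,t) = (0,0,1). Then at every point p ∈ ℝ³ the three vectors ξ₁(p), ξ₂(p) and the Lie bracket [ξ₂,ξ₁](p) form a basis of ℝ³; in particular the plane field spanned by ξ₁ and ξ₂ is a contact (completely non-holonomic) distribution. -/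
/-- The vector field `(cos (θt), -sin (θt), 0)` has derivative `(-θ sin (θt), -θ cos (θt), 0)`
in the direction `∂/∂t`. -/
lemma lieBracketR3_const_rotating (θ : ℝ) (p : ℝ × ℝ × ℝ) :
    lieBracketR3 (fun _ => (0, 0, 1))
      (fun p => (Real.cos (θ * p.2.2), -Real.sin (θ * p.2.2), 0)) p =
      (-(θ * Real.sin (θ * p.2.2)), -(θ * Real.cos (θ * p.2.2)), 0) := by
  have ht : HasFDerivAt (fun q : ℝ × ℝ × ℝ => θ * q.2.2)
      (θ • (ContinuousLinearMap.snd ℝ ℝ ℝ).comp (ContinuousLinearMap.snd ℝ ℝ (ℝ × ℝ))) p :=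
    ((ContinuousLinearMap.snd ℝ ℝ ℝ).comp
      (ContinuousLinearMap.snd ℝ ℝ (ℝ × ℝ))).hasFDerivAt.const_mul θ
  have h := ht.cos.prodMk (ht.sin.fun_neg.prodMk (hasFDerivAt_const (0 : ℝ) p))
  simp only [lieBracketR3]
  rw [h.fderiv]
  simp [mul_comm]

theorem contact_distribution_elliptic_case (θ : ℝ) (hθ : θ ≠ 0)
    (ξ₁ ξ₂ : ℝ × ℝ × ℝ → ℝ × ℝ × ℝ)
    (hξ₁ : ξ₁ = fun p => (Real.cos (θ * p.2.2), -Real.sin (θ * p.2.2), 0))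
    (hξ₂ : ξ₂ = fun _ => (0, 0, 1)) :
    ∀ p : ℝ × ℝ × ℝ,
      LinearIndependent ℝ ![ξ₁ p, ξ₂ p, lieBracketR3 ξ₂ ξ₁ p] ∧
      Submodule.span ℝ {ξ₁ p, ξ₂ p, lieBracketR3 ξ₂ ξ₁ p} = ⊤ := by
  intro p
  subst hξ₁ hξ₂
  rw [lieBracketR3_const_rotating]
  have hcs := Real.sin_sq_add_cos_sq (θ * p.2.2)
  set c := Real.cos (θ * p.2.2)
  set s := Real.sin (θ * p.2.2)
  have hli : LinearIndependent ℝ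
      ![((c, -s, 0) : ℝ × ℝ × ℝ), (0, 0, 1), (-(θ * s), -(θ * c), 0)] := by
    rw [Fintype.linearIndependent_iff]
    intro g hg
    simp only [Fin.sum_univ_three, Matrix.cons_val, Prod.smul_mk, Prod.mk_add_mk, smul_eq_mul,
      Prod.mk_eq_zero] at hg
    obtain ⟨hx, hy, ht⟩ := hg
    have h₀ : g 0 = 0 := by linear_combination c * hx - s * hy - g 0 * hcs
    have h₁ : g 1 = 0 := by linear_combination ht
    have h₂ : g 2 = 0 := by
      refine (mul_eq_zero.mp ?_).resolve_right hθ
      linear_combination -s * hx - c * hy - g 2 * θ * hcs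
    intro i
    fin_cases i <;> assumption
  refine ⟨hli, ?_⟩
  have hspan := hli.span_eq_top_of_card_eq_finrank (by simp)
  rwa [Matrix.range_cons, Matrix.range_cons, Matrix.range_cons, Matrix.range_empty,
    Set.union_empty, Set.singleton_union, Set.singleton_union] at hspan
end

section
/- Define vector fields on ℝ³ by ξ₁(x,y,t) = (cos(2πt) − t·sin(2πt), sin(2πt), 0) and ξ₂(x,y,t) = (0,0,1). Then at every point p ∈ ℝ³ the three vectors ξ₁(p), ξ₂(p) and the Lie bracket [ξ₂,ξ₁](p) form a basis of ℝ³ (the relevant 2×2 determinant equals 2π + sin²(2πt) > 0); in particular the plane field spanned by ξ₁ and ξ₂ is a contact (completely non-holonomic) distribution. -/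
/-- The bracket of the constant field `∂ₜ` with a field depending only on `t` is the
`t`-derivative of the latter. -/
theorem lieBracketR3_const_of_hasDerivAt {γ : ℝ → ℝ × ℝ × ℝ} {γ' : ℝ × ℝ × ℝ} {p : ℝ × ℝ × ℝ}
    (hγ : HasDerivAt γ γ' p.2.2) :
    lieBracketR3 (fun _ => (0, 0, 1)) (fun q => γ q.2.2) p = γ' := by
  have ht : HasFDerivAt (fun q : ℝ × ℝ × ℝ => q.2.2)
      ((ContinuousLinearMap.snd ℝ ℝ ℝ).comp (ContinuousLinearMap.snd ℝ ℝ (ℝ × ℝ))) p :=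
    hasFDerivAt_snd.comp p hasFDerivAt_snd
  have h := (hγ.hasFDerivAt.comp p ht).fderiv
  simp only [Function.comp_def] at h
  simp [lieBracketR3, h]

theorem hasDerivAt_jordan_box_field (t : ℝ) :
    HasDerivAt (fun t : ℝ => ((Real.cos (2 * Real.pi * t) - t * Real.sin (2 * Real.pi * t),
        Real.sin (2 * Real.pi * t), 0) : ℝ × ℝ × ℝ))
      (-(2 * Real.pi + 1) * Real.sin (2 * Real.pi * t)
        - 2 * Real.pi * t * Real.cos (2 * Real.pi * t),
        2 * Real.pi * Real.cos (2 * Real.pi * t), 0) t := by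
  have hlin : HasDerivAt (fun t : ℝ => 2 * Real.pi * t) (2 * Real.pi) t := by
    simpa using (hasDerivAt_id t).const_mul (2 * Real.pi)
  refine HasDerivAt.prodMk ?_ (HasDerivAt.prodMk ?_ (hasDerivAt_const t 0))
  · exact (hlin.cos.sub ((hasDerivAt_id' t).mul hlin.sin)).congr_deriv (by ring)
  · exact hlin.sin.congr_deriv (by ring)

/-- Two horizontal vectors with nonzero determinant and the vertical unit vector are linearly
independent. -/
theorem linearIndependent_horizontal_vertical {a b c d : ℝ} (hdet : a * d - b * c ≠ 0) :
    LinearIndependent ℝ ![((a, b, 0) : ℝ × ℝ × ℝ), (0, 0, 1), (c, d, 0)] := by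
  rw [Fintype.linearIndependent_iff]
  intro g hg
  simp only [Fin.sum_univ_three, Matrix.cons_val, Prod.smul_mk, Prod.mk_add_mk, smul_eq_mul,
    Prod.mk_eq_zero, mul_zero, mul_one, add_zero, zero_add] at hg
  obtain ⟨h₁, h₂, h₃⟩ := hg
  have h₀ : g 0 = 0 := (mul_eq_zero.mp (show g 0 * (a * d - b * c) = 0 by
    linear_combination d * h₁ - c * h₂)).resolve_right hdet
  have h₄ : g 2 = 0 := (mul_eq_zero.mp (show g 2 * (a * d - b * c) = 0 by
    linear_combination a * h₂ - b * h₁)).resolve_right hdet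
  intro i
  fin_cases i <;> assumption

theorem contact_distribution_jordan_box_case
    (ξ₁ ξ₂ : ℝ × ℝ × ℝ → ℝ × ℝ × ℝ)
    (hξ₁ : ξ₁ = fun p =>
      (Real.cos (2 * Real.pi * p.2.2) - p.2.2 * Real.sin (2 * Real.pi * p.2.2),
       Real.sin (2 * Real.pi * p.2.2), 0))
    (hξ₂ : ξ₂ = fun _ => (0, 0, 1)) :
    ∀ p : ℝ × ℝ × ℝ,
      LinearIndependent ℝ ![ξ₁ p, ξ₂ p, lieBracketR3 ξ₂ ξ₁ p] ∧
      Submodule.span ℝ {ξ₁ p, ξ₂ p, lieBracketR3 ξ₂ ξ₁ p} = ⊤ := by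
  intro p
  have hli : LinearIndependent ℝ ![ξ₁ p, ξ₂ p, lieBracketR3 ξ₂ ξ₁ p] := by
    rw [hξ₁, hξ₂, lieBracketR3_const_of_hasDerivAt (hasDerivAt_jordan_box_field p.2.2)]
    apply linearIndependent_horizontal_vertical
    have hdet : 0 < 2 * Real.pi + Real.sin (2 * Real.pi * p.2.2) ^ 2 := by positivity
    convert hdet.ne' using 1
    linear_combination 2 * Real.pi * Real.sin_sq_add_cos_sq (2 * Real.pi * p.2.2)
  refine ⟨hli, ?_⟩
  have hspan := hli.span_eq_top_of_card_eq_finrank' (by simp)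
  rwa [Matrix.range_cons, Matrix.range_cons_cons_empty, Set.singleton_union] at hspan
end
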